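/- Let K be a bounded convex open subset of R^d with diameter h_K and let v ∈ H^1(K). Then the L^2(K)-norm of v minus its mean value over K is bounded by (1/π)·h_K·‖∇v‖_{L^2(K)}. -/

import Mathlib

open MeasureTheory
open scoped ENNReal

theorem PW.bm_compact (A B C : Set ℝ) (hA : IsCompact A) (hB : IsCompact B)
    (hAn : A.Nonempty) (hBn : B.Nonempty) (hC : ∀ x ∈ A, ∀ y ∈ B, x + y ∈ C) :
    volume A + volume B ≤ volume C := by
  obtain ⟨a, ha, haM⟩ := hA.exists_isGreatest hAn
  obtain ⟨b, hb, hbm⟩ := hB.exists_isLeast hBn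
  have h1 : volume ((fun x => x + b) '' A) = volume A := by
    rw [Set.image_add_right]; simp
  have h2 : volume ((fun x => a + x) '' B) = volume B := by
    rw [Set.image_add_left]; simp
  have hd : AEDisjoint volume ((fun x => x + b) '' A) ((fun x => a + x) '' B) := by
    refine measure_mono_null (t := {a + b}) ?_ (by simp)
    rintro z ⟨⟨x, hx, rfl⟩, ⟨y, hy, hxy⟩⟩
    have := haM hx
    have := hbm hy
    simp only at hxy ⊢
    show x + b = a + b
    linarith
  rw [← h1, ← h2, ← measure_union₀ ((hB.image (by fun_prop)).measurableSet.nullMeasurableSet) hd]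
  apply measure_mono
  rintro z (⟨x, hx, rfl⟩ | ⟨x, hx, rfl⟩)
  · exact hC _ hx _ hb
  · exact hC _ ha _ hx

theorem PW.bm_meas (A B C : Set ℝ) (hA : MeasurableSet A) (hB : MeasurableSet B)
    (hAn : A.Nonempty) (hBn : B.Nonempty) (hC : ∀ x ∈ A, ∀ y ∈ B, x + y ∈ C) :
    volume A + volume B ≤ volume C := by
  obtain ⟨a, ha⟩ := hAn
  obtain ⟨b, hb⟩ := hBn
  rw [hA.measure_eq_iSup_isCompact, hB.measure_eq_iSup_isCompact]
  simp only [iSup_subtype']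
  have : Nonempty {K : Set ℝ // K ⊆ A ∧ IsCompact K} := ⟨⟨∅, by simp⟩⟩
  have : Nonempty {K : Set ℝ // K ⊆ B ∧ IsCompact K} := ⟨⟨∅, by simp⟩⟩
  have e1 : ⨆ (K : Set ℝ), ⨆ (_ : K ⊆ A), ⨆ (_ : IsCompact K), volume K ≤ ⨆ (K : {K : Set ℝ // K ⊆ A ∧ IsCompact K}), volume K.1 := by
    refine iSup_le fun K => iSup_le fun h => iSup_le fun h' => le_iSup (fun K : {K : Set ℝ // K ⊆ A ∧ IsCompact K} => volume K.1) ⟨K, h, h'⟩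
  have e2 : ⨆ (K : Set ℝ), ⨆ (_ : K ⊆ B), ⨆ (_ : IsCompact K), volume K ≤ ⨆ (K : {K : Set ℝ // K ⊆ B ∧ IsCompact K}), volume K.1 := by
    refine iSup_le fun K => iSup_le fun h => iSup_le fun h' => le_iSup (fun K : {K : Set ℝ // K ⊆ B ∧ IsCompact K} => volume K.1) ⟨K, h, h'⟩
  simp only [iSup_subtype'] at e1 e2
  refine (add_le_add e1 e2).trans ?_
  refine ENNReal.iSup_add_iSup_le ?_
  rintro ⟨K, hK, hKc⟩ ⟨L, hL, hLc⟩
  refine le_trans ?_ (PW.bm_compact (insert a K) (insert b L) C (hKc.insert a) (hLc.insert b) (by simp) (by simp) ?_)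
  · exact add_le_add (measure_mono (by simp)) (measure_mono (by simp))
  · rintro x (rfl | hx) y (rfl | hy)
    · exact hC _ ha _ hb
    · exact hC _ ha _ (hL hy)
    · exact hC _ (hK hx) _ hb
    · exact hC _ (hK hx) _ (hL hy)

open scoped Pointwise in
theorem PW.bm_t (t : ℝ) (ht0 : 0 < t) (ht1 : t < 1) (A B C : Set ℝ) (hA : MeasurableSet A) (hB : MeasurableSet B)
    (hAn : A.Nonempty) (hBn : B.Nonempty) (hC : ∀ x ∈ A, ∀ y ∈ B, (1-t) * x + t * y ∈ C) :
    ENNReal.ofReal (1-t) * volume A + ENNReal.ofReal t * volume B ≤ volume C := by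
  have h1 : volume ((1-t) • A) = ENNReal.ofReal (1-t) * volume A := by
    rw [Measure.addHaar_smul]; simp [abs_of_pos (sub_pos.2 ht1)]
  have h2 : volume (t • B) = ENNReal.ofReal t * volume B := by
    rw [Measure.addHaar_smul]; simp [abs_of_pos ht0]
  rw [← h1, ← h2]
  apply PW.bm_meas _ _ _ (hA.const_smul₀ _) (hB.const_smul₀ _) (hAn.image _) (hBn.image _)
  rintro _ ⟨x, hx, rfl⟩ _ ⟨y, hy, rfl⟩
  exact hC x hx y hy

theorem PW.pl_norm (t : ℝ) (ht0 : 0 < t) (ht1 : t < 1) (f g h : ℝ → ℝ)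
    (hf : Measurable f) (hg : Measurable g) (hh : Measurable h)
    (hf0 : ∀ x, 0 ≤ f x) (hg0 : ∀ x, 0 ≤ g x) (hh0 : ∀ x, 0 ≤ h x)
    (hf1 : ∀ x, f x ≤ 1) (hg1 : ∀ x, g x ≤ 1)
    (hfs : ∀ r < 1, ∃ x, r < f x) (hgs : ∀ r < 1, ∃ x, r < g x)
    (H : ∀ x y, f x ^ (1-t) * g y ^ t ≤ h ((1-t) * x + t * y)) :
    ENNReal.ofReal (1-t) * (∫⁻ x, ENNReal.ofReal (f x)) + ENNReal.ofReal t * (∫⁻ x, ENNReal.ofReal (g x))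
      ≤ ∫⁻ x, ENNReal.ofReal (h x) := by
  rw [lintegral_eq_lintegral_meas_lt volume (.of_forall hf0) hf.aemeasurable,
    lintegral_eq_lintegral_meas_lt volume (.of_forall hg0) hg.aemeasurable,
    lintegral_eq_lintegral_meas_lt volume (.of_forall hh0) hh.aemeasurable]
  have mono (f : ℝ → ℝ) : Measurable (fun r => volume {a | r < f a}) := by
    apply Antitone.measurable
    intro r s hrs
    apply measure_mono
    intro a ha
    exact lt_of_le_of_lt hrs ha
  rw [← lintegral_const_mul _ (mono f), ← lintegral_const_mul _ (mono g),
    ← lintegral_add_left ((mono f).const_mul _)]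
  refine setLIntegral_mono (mono h) ?_
  intro r hr
  by_cases h1 : r < 1
  · apply PW.bm_t t ht0 ht1
    · exact measurableSet_lt measurable_const hf
    · exact measurableSet_lt measurable_const hg
    · exact hfs r h1
    · exact hgs r h1
    · intro x hx y hy
      refine lt_of_lt_of_le ?_ (H x y)
      have hr0 : (0:ℝ) < r := hr
      calc r = r ^ (1-t) * r ^ t := by rw [← Real.rpow_add hr0]; simp
        _ < _ := by
          apply mul_lt_mul'' _ _ (by positivity) (by positivity)
          · exact Real.rpow_lt_rpow hr0.le hx (by linarith)
          · exact Real.rpow_lt_rpow hr0.le hy (by linarith)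
  · have e1 : {a | r < f a} = ∅ := by
      ext a; simp; linarith [hf1 a]
    have e2 : {a | r < g a} = ∅ := by
      ext a; simp; linarith [hg1 a]
    rw [e1, e2]; simp


theorem PW.amgm (t : ℝ) (ht0 : 0 < t) (ht1 : t < 1) (a b : ℝ≥0∞) :
    a ^ (1-t) * b ^ t ≤ ENNReal.ofReal (1-t) * a + ENNReal.ofReal t * b := by
  have h1 : 0 < 1 - t := by linarith
  by_cases ha : a = ∞
  · subst ha
    rw [ENNReal.mul_top (by simpa using ht1)]; simp
  by_cases hb : b = ∞
  · subst hb
    rw [ENNReal.mul_top (a := ENNReal.ofReal t) (by simpa using ht0)]; simp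
  lift a to NNReal using ha
  lift b to NNReal using hb
  have := NNReal.geom_mean_le_arith_mean2_weighted ⟨1-t, h1.le⟩ ⟨t, ht0.le⟩ a b (by apply NNReal.eq; show (1 - t) + t = 1; ring)
  rw [← ENNReal.coe_rpow_of_nonneg _ h1.le, ← ENNReal.coe_rpow_of_nonneg _ ht0.le,
    ENNReal.ofReal_eq_coe_nnreal h1.le, ENNReal.ofReal_eq_coe_nnreal ht0.le]
  exact_mod_cast this

theorem PW.pl_bdd (t : ℝ) (ht0 : 0 < t) (ht1 : t < 1) (f g h : ℝ → ℝ≥0∞)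
    (hf : Measurable f) (hg : Measurable g) (hh : Measurable h)
    (hfb : ⨆ x, f x ≠ ∞) (hgb : ⨆ x, g x ≠ ∞)
    (H : ∀ x y, f x ^ (1-t) * g y ^ t ≤ h ((1-t) * x + t * y)) :
    (∫⁻ x, f x) ^ (1-t) * (∫⁻ x, g x) ^ t ≤ ∫⁻ x, h x := by
  have h1 : 0 < 1 - t := by linarith
  set F := ⨆ x, f x with hF
  set G := ⨆ x, g x with hG
  have hfF : ∀ x, f x ≤ F := fun x => le_iSup f x
  have hgG : ∀ x, g x ≤ G := fun x => le_iSup g x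
  by_cases hF0 : F = 0
  · have : ∀ x, f x = 0 := fun x => le_antisymm (hF0 ▸ hfF x) bot_le
    simp [this, h1]
  by_cases hG0 : G = 0
  · have : ∀ x, g x = 0 := fun x => le_antisymm (hG0 ▸ hgG x) bot_le
    simp [this, ht0]
  set M := F ^ (1-t) * G ^ t with hM
  have hFt : F ^ (1-t) ≠ 0 := by simp [hF0, hfb, h1, h1.le]
  have hGt : G ^ t ≠ 0 := by simp [hG0, hgb, ht0, ht0.le]
  have hFt' : F ^ (1-t) ≠ ∞ := by simp [hF0, hfb, h1, h1.le]
  have hGt' : G ^ t ≠ ∞ := by simp [hG0, hgb, ht0, ht0.le]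
  have hM0 : M ≠ 0 := mul_ne_zero hFt hGt
  have hMt : M ≠ ∞ := ENNReal.mul_ne_top hFt' hGt'
  have hdivle : ∀ {a b : ℝ≥0∞}, a ≤ b → a / b ≤ 1 := fun h => ENNReal.div_le_of_le_mul (by simpa using h)
  have nt : ∀ {a : ℝ≥0∞}, a ≤ 1 → a ≠ ∞ := fun h => ne_top_of_le_ne_top ENNReal.one_ne_top h
  have key := PW.pl_norm t ht0 ht1 (fun x => (f x / F).toReal) (fun x => (g x / G).toReal)
    (fun x => (min (h x / M) 1).toReal) (by fun_prop) (by fun_prop) (by fun_prop)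
    (by intro; positivity) (by intro; positivity) (by intro; positivity)
    (fun x => by simpa using ENNReal.toReal_mono (by simp) (hdivle (hfF x)))
    (fun x => by simpa using ENNReal.toReal_mono (by simp) (hdivle (hgG x)))
    ?_ ?_ ?_
  · have e1 : ∀ x, ENNReal.ofReal ((f x / F).toReal) = f x / F := fun x => ENNReal.ofReal_toReal (nt (hdivle (hfF x)))
    have e2 : ∀ x, ENNReal.ofReal ((g x / G).toReal) = g x / G := fun x => ENNReal.ofReal_toReal (nt (hdivle (hgG x)))
    have e3 : ∀ x, ENNReal.ofReal ((min (h x / M) 1).toReal) ≤ h x / M := fun x => by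
      rw [ENNReal.ofReal_toReal (nt (min_le_right _ _))]; exact min_le_left _ _
    simp only [e1, e2] at key
    have k2 := (PW.amgm t ht0 ht1 _ _).trans (key.trans (lintegral_mono e3))
    simp only [div_eq_mul_inv] at k2
    rw [lintegral_mul_const _ hf, lintegral_mul_const _ hg, lintegral_mul_const _ hh,
      ENNReal.mul_rpow_of_nonneg _ _ h1.le, ENNReal.mul_rpow_of_nonneg _ _ ht0.le,
      ENNReal.inv_rpow, ENNReal.inv_rpow] at k2
    have k3 := mul_le_mul_left k2 M
    rw [mul_assoc (∫⁻ x, h x), ENNReal.inv_mul_cancel hM0 hMt, mul_one] at k3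
    refine le_trans (le_of_eq ?_) k3
    rw [hM]
    calc _ = (∫⁻ x, f x) ^ (1-t) * (∫⁻ x, g x) ^ t * ((F ^ (1-t))⁻¹ * F ^ (1-t)) * ((G^t)⁻¹ * G ^ t) := by
          rw [ENNReal.inv_mul_cancel hFt hFt', ENNReal.inv_mul_cancel hGt hGt']; simp
      _ = _ := by ring
  · intro r hr
    by_cases hr0 : r < 0
    · exact ⟨0, lt_of_lt_of_le hr0 ENNReal.toReal_nonneg⟩
    have : ENNReal.ofReal r * F < F := by
      conv_rhs => rw [← one_mul F]
      exact (ENNReal.mul_lt_mul_iff_left hF0 hfb).2 (by simpa using hr)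
    obtain ⟨x, hx⟩ := lt_iSup_iff.1 this
    refine ⟨x, ?_⟩
    rw [← ENNReal.ofReal_lt_iff_lt_toReal (by linarith) (nt (hdivle (hfF x)))]
    exact (ENNReal.lt_div_iff_mul_lt (.inl hF0) (.inl hfb)).2 hx
  · intro r hr
    by_cases hr0 : r < 0
    · exact ⟨0, lt_of_lt_of_le hr0 ENNReal.toReal_nonneg⟩
    have : ENNReal.ofReal r * G < G := by
      conv_rhs => rw [← one_mul G]
      exact (ENNReal.mul_lt_mul_iff_left hG0 hgb).2 (by simpa using hr)
    obtain ⟨x, hx⟩ := lt_iSup_iff.1 this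
    refine ⟨x, ?_⟩
    rw [← ENNReal.ofReal_lt_iff_lt_toReal (by linarith) (nt (hdivle (hgG x)))]
    exact (ENNReal.lt_div_iff_mul_lt (.inl hG0) (.inl hgb)).2 hx
  · intro x y
    rw [ENNReal.toReal_rpow, ENNReal.toReal_rpow, ← ENNReal.toReal_mul]
    refine ENNReal.toReal_mono (nt (min_le_right _ _)) (le_min ?_ ?_)
    · rw [ENNReal.div_rpow_of_nonneg _ _ h1.le, ENNReal.div_rpow_of_nonneg _ _ ht0.le]
      rw [ENNReal.le_div_iff_mul_le (.inl hM0) (.inl hMt)]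
      refine le_trans (le_of_eq ?_) (H x y)
      rw [hM]
      simp only [div_eq_mul_inv]
      calc _ = (f x) ^ (1-t) * (g y) ^ t * ((F ^ (1-t))⁻¹ * F ^ (1-t)) * ((G^t)⁻¹ * G ^ t) := by ring
        _ = _ := by
          rw [ENNReal.inv_mul_cancel hFt hFt', ENNReal.inv_mul_cancel hGt hGt']; simp
    · exact mul_le_one' (ENNReal.rpow_le_one (hdivle (hfF x)) h1.le) (ENNReal.rpow_le_one (hdivle (hgG y)) ht0.le)

theorem PW.lint_min (f : ℝ → ℝ≥0∞) (hf : Measurable f) :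
    Filter.Tendsto (fun n : ℕ => ∫⁻ x, min (f x) n) Filter.atTop (nhds (∫⁻ x, f x)) := by
  apply lintegral_tendsto_of_tendsto_of_monotone
  · intro n; fun_prop
  · refine .of_forall fun x n m hnm => ?_
    exact min_le_min le_rfl (by exact_mod_cast hnm)
  · refine .of_forall fun x => ?_
    have := (tendsto_const_nhds (x := f x)).min ENNReal.tendsto_nat_nhds_top
    simpa using this

theorem PW.pl_one (t : ℝ) (ht0 : 0 < t) (ht1 : t < 1) (f g h : ℝ → ℝ≥0∞)
    (hf : Measurable f) (hg : Measurable g) (hh : Measurable h)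
    (H : ∀ x y, f x ^ (1-t) * g y ^ t ≤ h ((1-t) * x + t * y)) :
    (∫⁻ x, f x) ^ (1-t) * (∫⁻ x, g x) ^ t ≤ ∫⁻ x, h x := by
  have h1 : 0 < 1 - t := by linarith
  by_cases hF0 : ∫⁻ x, f x = 0
  · simp [hF0, h1]
  by_cases hG0 : ∫⁻ x, g x = 0
  · simp [hG0, ht0]
  have T : Filter.Tendsto (fun n : ℕ => (∫⁻ x, min (f x) n) ^ (1-t) * (∫⁻ x, min (g x) n) ^ t) Filter.atTop
      (nhds ((∫⁻ x, f x) ^ (1-t) * (∫⁻ x, g x) ^ t)) := by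
    apply ENNReal.Tendsto.mul
    · exact (PW.lint_min f hf).ennrpow_const _
    · left; simp [hF0, h1, h1.le, h1.not_gt]
    · exact (PW.lint_min g hg).ennrpow_const _
    · left; simp [hG0, ht0, ht0.le, ht0.not_gt]
  refine le_of_tendsto' T fun n => ?_
  refine PW.pl_bdd t ht0 ht1 _ _ _ (by fun_prop) (by fun_prop) hh ?_ ?_ ?_
  · exact ne_top_of_le_ne_top (ENNReal.natCast_ne_top n) (iSup_le fun x => min_le_right _ _)
  · exact ne_top_of_le_ne_top (ENNReal.natCast_ne_top n) (iSup_le fun x => min_le_right _ _)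
  · intro x y
    refine le_trans (mul_le_mul' ?_ ?_) (H x y)
    · exact ENNReal.rpow_le_rpow (min_le_left _ _) h1.le
    · exact ENNReal.rpow_le_rpow (min_le_left _ _) ht0.le

theorem PW.lint_succ (n : ℕ) (f : (Fin (n+1) → ℝ) → ℝ≥0∞) (hf : Measurable f) :
    ∫⁻ x, f x = ∫⁻ s : ℝ, ∫⁻ y : Fin n → ℝ, f (Fin.cons s y) := by
  have := (volume_preserving_piFinSuccAbove (fun _ : Fin (n + 1) => ℝ) 0).symm
  rw [← this.lintegral_comp hf, Measure.volume_eq_prod, lintegral_prod]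
  · simp [MeasurableEquiv.piFinSuccAbove, Fin.insertNthEquiv, Fin.insertNth_zero']
  · exact (hf.comp this.measurable).aemeasurable

theorem PW.meas_cons (n : ℕ) : Measurable (fun p : ℝ × (Fin n → ℝ) => (Fin.cons p.1 p.2 : Fin (n+1) → ℝ)) := by
  have := (volume_preserving_piFinSuccAbove (fun _ : Fin (n + 1) => ℝ) 0).symm.measurable
  convert this using 1
  ext p : 1
  simp [MeasurableEquiv.piFinSuccAbove, Fin.insertNthEquiv, Fin.insertNth_zero']

theorem PW.pl (t : ℝ) (ht0 : 0 < t) (ht1 : t < 1) (n : ℕ) : ∀ (f g h : (Fin n → ℝ) → ℝ≥0∞)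
    (_ : Measurable f) (_ : Measurable g) (_ : Measurable h)
    (_ : ∀ x y, f x ^ (1-t) * g y ^ t ≤ h ((1-t) • x + t • y)),
    (∫⁻ x, f x) ^ (1-t) * (∫⁻ x, g x) ^ t ≤ ∫⁻ x, h x := by
  induction n with
  | zero =>
    intro f g h hf hg hh H
    simp only [volume_pi, Measure.pi_of_empty (x := 0), lintegral_dirac]
    simpa using H 0 0
  | succ n ih =>
    intro f g h hf hg hh H
    rw [PW.lint_succ n f hf, PW.lint_succ n g hg, PW.lint_succ n h hh]
    have M : ∀ {f : (Fin (n+1) → ℝ) → ℝ≥0∞}, Measurable f → Measurable (fun s : ℝ => ∫⁻ y : Fin n → ℝ, f (Fin.cons s y)) := by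
      intro f hf
      exact (hf.comp (PW.meas_cons n)).lintegral_prod_right'
    have M2 : ∀ {f : (Fin (n+1) → ℝ) → ℝ≥0∞} (s : ℝ), Measurable f → Measurable (fun y : Fin n → ℝ => f (Fin.cons s y)) := by
      intro f s hf
      exact (hf.comp (PW.meas_cons n)).comp measurable_prodMk_left
    refine PW.pl_one t ht0 ht1 _ _ _ (M hf) (M hg) (M hh) ?_
    intro s r
    refine ih _ _ _ (M2 _ hf) (M2 _ hg) (M2 _ hh) ?_
    intro x y
    refine (H _ _).trans (le_of_eq ?_)
    congr 1
    ext i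
    refine Fin.cases ?_ (fun i => ?_) i <;> simp

/-- log-concavity of sections -/
theorem PW.section_logconcave (n : ℕ) (K : Set (ℝ × (Fin n → ℝ))) (hK : Convex ℝ K) (hm : MeasurableSet K)
    (t : ℝ) (ht0 : 0 < t) (ht1 : t < 1) (s r : ℝ) :
    volume (Prod.mk s ⁻¹' K) ^ (1-t) * volume (Prod.mk r ⁻¹' K) ^ t ≤
      volume (Prod.mk ((1-t)*s + t*r) ⁻¹' K) := by
  have h1 : 0 < 1 - t := by linarith
  have m : ∀ s : ℝ, MeasurableSet (Prod.mk s ⁻¹' K) := fun s => measurable_prodMk_left hm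
  have := PW.pl t ht0 ht1 n ((Prod.mk s ⁻¹' K).indicator 1) ((Prod.mk r ⁻¹' K).indicator 1)
    ((Prod.mk ((1-t)*s + t*r) ⁻¹' K).indicator 1) (measurable_one.indicator (m _))
     (measurable_one.indicator (m _)) (measurable_one.indicator (m _)) ?_
  · simpa [lintegral_indicator_one (m _)] using this
  · intro x y
    by_cases hx : x ∈ (Prod.mk s ⁻¹' K)
    · by_cases hy : y ∈ (Prod.mk r ⁻¹' K)
      · have : (1-t) • x + t • y ∈ Prod.mk ((1-t)*s + t*r) ⁻¹' K := by
          have := hK hx hy h1.le ht0.le (by ring)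
          simpa using this
        rw [Set.indicator_of_mem hx, Set.indicator_of_mem hy, Set.indicator_of_mem this]
        simp
      · rw [Set.indicator_of_notMem hy]; simp [ht0]
    · rw [Set.indicator_of_notMem hx]; simp [h1]


theorem PW.poinc_smooth (a b μ : ℝ) (hab : a < b) (hμ : 0 < μ) (hμL : μ * (b - a) < Real.pi)
    (V V1 V2 φ φ1 : ℝ → ℝ) (hV : ∀ x, HasDerivAt V (V1 x) x) (hV1 : ∀ x, HasDerivAt V1 (V2 x) x)
    (hV2c : Continuous V2) (hV2 : ∀ x ∈ Set.Icc a b, 0 ≤ V2 x)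
    (hφ : ∀ x, HasDerivAt φ (φ1 x) x) (hφ1 : Continuous φ1) :
    (∫ x in a..b, Real.exp (-V x)) * (∫ x in a..b, φ x ^ 2 * Real.exp (-V x))
      - (∫ x in a..b, φ x * Real.exp (-V x)) ^ 2 ≤
    (1 / μ ^ 2) * ((∫ x in a..b, Real.exp (-V x)) * (∫ x in a..b, φ1 x ^ 2 * Real.exp (-V x))) := by
  have cV : Continuous V := continuous_iff_continuousAt.2 fun x => (hV x).continuousAt
  have cV1 : Continuous V1 := continuous_iff_continuousAt.2 fun x => (hV1 x).continuousAt
  have cφ : Continuous φ := continuous_iff_continuousAt.2 fun x => (hφ x).continuousAt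
  set M := ∫ x in a..b, Real.exp (-V x) with hM
  set X := ∫ x in a..b, φ x * Real.exp (-V x) with hX
  have hMpos : 0 < M := by
    apply intervalIntegral.intervalIntegral_pos_of_pos_on _ _ hab
    · exact Continuous.intervalIntegrable (by fun_prop) _ _
    · intro x _; positivity
  set c := X / M with hc
  set h : ℝ → ℝ := fun x => (φ x - c) * Real.exp (-V x) with hh
  have ch : Continuous h := by fun_prop
  set H : ℝ → ℝ := fun s => ∫ x in a..s, h x with hH
  have dH : ∀ s, HasDerivAt H (h s) s := fun s =>
    intervalIntegral.integral_hasDerivAt_right (ch.intervalIntegrable _ _)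
      (ch.stronglyMeasurableAtFilter _ _) ch.continuousAt
  have cH : Continuous H := continuous_iff_continuousAt.2 fun x => (dH x).continuousAt
  have Ha : H a = 0 := by simp [hH]
  have Hb : H b = 0 := by
    simp only [hH, hh, sub_mul]
    rw [intervalIntegral.integral_sub, intervalIntegral.integral_const_mul]
    · rw [← hX, ← hM, hc]; field_simp; ring
    · exact Continuous.intervalIntegrable (by fun_prop) _ _
    · exact Continuous.intervalIntegrable (by fun_prop) _ _
  set m := (a + b) / 2 with hm
  set T : ℝ → ℝ := fun s => Real.tan (μ * (s - m)) with hT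
  have hcos : ∀ s ∈ Set.Icc a b, 0 < Real.cos (μ * (s - m)) := by
    intro s hs
    apply Real.cos_pos_of_mem_Ioo
    constructor
    · nlinarith [hs.1, hs.2]
    · nlinarith [hs.1, hs.2]
  have dT : ∀ s ∈ Set.Icc a b, HasDerivAt T (μ * (1 + T s ^ 2)) s := by
    intro s hs
    have h1 := (Real.hasDerivAt_tan (hcos s hs).ne')
    have h2 : HasDerivAt (fun s => μ * (s - m)) μ s := by
      simpa using ((hasDerivAt_id s).sub_const m).const_mul μ
    have h3 := h1.comp s h2
    refine HasDerivAt.congr_deriv (f := T) h3 ?_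
    show 1 / Real.cos (μ * (s - m)) ^ 2 * μ = μ * (1 + Real.tan (μ * (s - m)) ^ 2)
    rw [Real.tan_eq_sin_div_cos]
    have := (hcos s hs).ne'
    field_simp
    rw [Real.cos_sq_add_sin_sq]
  have cT : ContinuousOn T (Set.Icc a b) := fun s hs => (dT s hs).continuousAt.continuousWithinAt
  set q : ℝ → ℝ := fun s => - μ * T s - V1 s / 2 with hq
  have dq : ∀ s ∈ Set.Icc a b, HasDerivAt q (- μ * (μ * (1 + T s ^ 2)) - V2 s / 2) s := by
    intro s hs
    exact ((dT s hs).const_mul (-μ)).sub ((hV1 s).div_const 2)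
  set P : ℝ → ℝ := fun s => 2 * ((φ s - c) * H s) - H s ^ 2 * q s * Real.exp (V s) with hP
  set P' : ℝ → ℝ := fun s => 2 * (φ1 s * H s + (φ s - c) * h s) -
    ((2 * H s * h s * q s + H s ^ 2 * (- μ * (μ * (1 + T s ^ 2)) - V2 s / 2)) * Real.exp (V s)
      + H s ^ 2 * q s * (Real.exp (V s) * V1 s)) with hP'
  have dP : ∀ s ∈ Set.Icc a b, HasDerivAt P (P' s) s := by
    intro s hs
    have h1 := (((hφ s).sub_const c).mul (dH s)).const_mul 2
    have h2 := (((dH s).pow 2).mul (dq s hs)).mul ((hV s).exp)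
    refine HasDerivAt.congr_deriv (f := P) (h1.sub h2) ?_
    simp only [hP', Pi.pow_apply, Pi.mul_apply]
    push_cast
    ring
  have cP' : ContinuousOn P' (Set.Icc a b) := by
    simp only [hP', hq]
    fun_prop
  have hint : ∫ s in a..b, P' s = 0 := by
    rw [intervalIntegral.integral_eq_sub_of_hasDerivAt (f := P)]
    · simp [hP, Ha, Hb]
    · rw [Set.uIcc_of_le hab.le]; exact dP
    · apply ContinuousOn.intervalIntegrable; rwa [Set.uIcc_of_le hab.le]
  have main : ∫ s in a..b, ((φ s - c) ^ 2 * Real.exp (-V s) - (1/μ^2) * (φ1 s ^ 2 * Real.exp (-V s))) ≤ 0 := by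
    rw [← hint]
    apply intervalIntegral.integral_mono_on hab.le
    · exact Continuous.intervalIntegrable (by fun_prop) _ _
    · apply ContinuousOn.intervalIntegrable; rwa [Set.uIcc_of_le hab.le]
    · intro s hs
      have hE : Real.exp (-V s) * Real.exp (V s) = 1 := by rw [← Real.exp_add]; simp
      set E := Real.exp (V s) with hEdef
      set r := Real.exp (-V s)
      have hE0 : 0 < E := Real.exp_pos _
      have id : P' s - ((φ s - c) ^ 2 * r - (1/μ^2) * (φ1 s ^ 2 * r)) =
          E * ((φ s - c) * r - H s * q s) ^ 2 + E * (μ * H s + φ1 s * r / μ) ^ 2 +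
          H s ^ 2 * E * (V2 s / 2 + V1 s ^ 2 / 4) := by
        have hr : r = 1 / E := by field_simp; linarith
        simp only [hP', hh, hq]
        change 2 * (φ1 s * H s + (φ s - c) * ((φ s - c) * r)) -
          ((2 * H s * ((φ s - c) * r) * (- μ * T s - V1 s / 2) + H s ^ 2 * (- μ * (μ * (1 + T s ^ 2)) - V2 s / 2)) * E
          + H s ^ 2 * (- μ * T s - V1 s / 2) * (E * V1 s)) - ((φ s - c) ^ 2 * r - (1/μ^2) * (φ1 s ^ 2 * r)) = _
        rw [hr]
        field_simp
        ring
      have : 0 ≤ P' s - ((φ s - c) ^ 2 * r - (1/μ^2) * (φ1 s ^ 2 * r)) := by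
        rw [id]
        have := hV2 s hs
        positivity
      linarith
  rw [intervalIntegral.integral_sub (Continuous.intervalIntegrable (by fun_prop) _ _) (Continuous.intervalIntegrable (by fun_prop) _ _),
    intervalIntegral.integral_const_mul] at main
  have ex : ∫ s in a..b, (φ s - c) ^ 2 * Real.exp (-V s) = (∫ x in a..b, φ x ^ 2 * Real.exp (-V x)) - 2 * c * X + c ^ 2 * M := by
    rw [hX, hM, ← intervalIntegral.integral_const_mul, ← intervalIntegral.integral_const_mul,
      ← intervalIntegral.integral_sub, ← intervalIntegral.integral_add]
    · congr 1; ext s; ring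
    all_goals exact Continuous.intervalIntegrable (by fun_prop) _ _
  rw [ex] at main
  have hXc : X = c * M := by rw [hc]; field_simp
  have := mul_le_mul_of_nonneg_left main hMpos.le
  rw [hXc] at this ⊢
  nlinarith

theorem PW.poinc_cont (a b μ η : ℝ) (hab : a < b) (hμ : 0 < μ) (hμL : μ * (b - a) < Real.pi) (hη : 0 < η)
    (V φ φ1 : ℝ → ℝ) (cV : Continuous V)
    (hV2 : ∀ x ∈ Set.Icc a b, ∀ δ, 0 < δ → δ < η → 0 ≤ V (x + δ + δ) - V (x + δ) - (V (x + δ) - V x))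
    (hφ : ∀ x, HasDerivAt φ (φ1 x) x) (hφ1 : Continuous φ1) :
    (∫ x in a..b, Real.exp (-V x)) * (∫ x in a..b, φ x ^ 2 * Real.exp (-V x))
      - (∫ x in a..b, φ x * Real.exp (-V x)) ^ 2 ≤
    (1 / μ ^ 2) * ((∫ x in a..b, Real.exp (-V x)) * (∫ x in a..b, φ1 x ^ 2 * Real.exp (-V x))) := by
  have cφ : Continuous φ := continuous_iff_continuousAt.2 fun x => (hφ x).continuousAt
  set F1 : ℝ → ℝ := fun s => ∫ x in (0:ℝ)..s, V x with hF1
  have dF1 : ∀ s, HasDerivAt F1 (V s) s := fun s =>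
    intervalIntegral.integral_hasDerivAt_right (cV.intervalIntegrable _ _)
      (cV.stronglyMeasurableAtFilter _ _) cV.continuousAt
  have cF1 : Continuous F1 := continuous_iff_continuousAt.2 fun x => (dF1 x).continuousAt
  set F : ℝ → ℝ := fun s => ∫ x in (0:ℝ)..s, F1 x with hF
  have dF : ∀ s, HasDerivAt F (F1 s) s := fun s =>
    intervalIntegral.integral_hasDerivAt_right (cF1.intervalIntegrable _ _)
      (cF1.stronglyMeasurableAtFilter _ _) cF1.continuousAt
  set D : ℝ → (ℝ → ℝ) → ℝ → ℝ := fun δ f s => (f (s + δ + δ) - f (s + δ) - (f (s + δ) - f s)) / δ ^ 2 with hD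
  have dD : ∀ δ (f f' : ℝ → ℝ), (∀ s, HasDerivAt f (f' s) s) → ∀ s, HasDerivAt (D δ f) (D δ f' s) s := by
    intro δ f f' hf s
    have h1 : HasDerivAt (fun s => f (s + δ)) (f' (s + δ)) s := by
      simpa using (hf (s+δ)).comp_add_const s δ
    have h2 : HasDerivAt (fun s => f (s + δ + δ)) (f' (s + δ + δ)) s := by
      have := (hf (s+(δ+δ))).comp_add_const s (δ+δ)
      simpa [add_assoc] using this
    exact ((h2.sub h1).sub (h1.sub (hf s))).div_const _
  have mv : ∀ δ, 0 < δ → ∀ s, ∃ ξ, s < ξ ∧ ξ < s + δ + δ ∧ D δ F s = V ξ := by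
    intro δ hδ s
    have dG : ∀ u, HasDerivAt (fun u => F (u + δ) - F u) (F1 (u + δ) - F1 u) u := by
      intro u
      exact ((dF (u+δ)).comp_add_const u δ).sub (dF u)
    obtain ⟨u, hu, hu'⟩ := exists_hasDerivAt_eq_slope (fun u => F (u + δ) - F u) (fun u => F1 (u + δ) - F1 u)
      (show s < s + δ by linarith) (fun u _ => (dG u).continuousAt.continuousWithinAt) (fun u _ => dG u)
    obtain ⟨ξ, hξ, hξ'⟩ := exists_hasDerivAt_eq_slope F1 V
      (show u < u + δ by linarith) (fun u _ => (dF1 u).continuousAt.continuousWithinAt) (fun u _ => dF1 u)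
    refine ⟨ξ, by linarith [hu.1, hξ.1], by linarith [hu.2, hξ.2], ?_⟩
    rw [hξ', hD]
    simp only at hu' ⊢
    rw [hu', add_sub_cancel_left, add_sub_cancel_left]
    field_simp
  obtain ⟨B, hB⟩ := (isCompact_Icc (a := a) (b := b + 2 * η)).bddBelow_image (f := V) cV.continuousOn
  set δ : ℕ → ℝ := fun n => η / (n + 2) with hδ
  have δpos : ∀ n, 0 < δ n := fun n => by positivity
  have δlt : ∀ n, δ n < η := fun n => by
    rw [hδ]; simp only
    rw [div_lt_iff₀ (by positivity)]
    have : (0:ℝ) ≤ n := by positivity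
    nlinarith
  have δlim : Filter.Tendsto δ Filter.atTop (nhds 0) := by
    have h := (tendsto_const_div_atTop_nhds_zero_nat η).comp (Filter.tendsto_add_atTop_nat 2)
    refine h.congr fun n => ?_
    simp [hδ]
  have lim : ∀ ψ : ℝ → ℝ, Continuous ψ → Filter.Tendsto (fun n => ∫ x in a..b, ψ x * Real.exp (-(D (δ n) F x)))
      Filter.atTop (nhds (∫ x in a..b, ψ x * Real.exp (-V x))) := by
    intro ψ cψ
    have cD : ∀ n, Continuous (D (δ n) F) := fun n =>
      continuous_iff_continuousAt.2 fun x => (dD (δ n) F F1 dF x).continuousAt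
    apply intervalIntegral.tendsto_integral_filter_of_dominated_convergence (fun x => |ψ x| * Real.exp (-B))
    · refine .of_forall fun n => ?_
      have := cD n
      exact Continuous.aestronglyMeasurable (by fun_prop)
    · refine .of_forall fun n => .of_forall fun x hx => ?_
      rw [Set.uIoc_of_le hab.le] at hx
      rw [norm_mul, Real.norm_eq_abs, Real.norm_eq_abs, Real.abs_exp]
      gcongr
      obtain ⟨ξ, h1, h2, h3⟩ := mv (δ n) (δpos n) x
      rw [h3]
      apply hB
      refine ⟨ξ, ⟨by linarith [hx.1], by linarith [hx.2, δlt n]⟩, rfl⟩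
    · exact Continuous.intervalIntegrable (by fun_prop) _ _
    · refine .of_forall fun x hx => ?_
      have : Filter.Tendsto (fun n => D (δ n) F x) Filter.atTop (nhds (V x)) := by
        choose ξ h1 h2 h3 using fun n => mv (δ n) (δpos n) x
        simp only [h3]
        refine (cV.tendsto x).comp ?_
        refine tendsto_of_tendsto_of_tendsto_of_le_of_le tendsto_const_nhds ?_ (fun n => (h1 n).le) (fun n => (h2 n).le)
        simpa using (δlim.const_add x).add δlim
      exact ((Real.continuous_exp.tendsto _).comp this.neg).const_mul _
  have l1 := lim (fun _ => 1) continuous_const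
  have l2 := lim (fun x => φ x ^ 2) (by fun_prop)
  have l3 := lim φ cφ
  have l4 := lim (fun x => φ1 x ^ 2) (by fun_prop)
  simp only [one_mul] at l1
  refine le_of_tendsto_of_tendsto' ((l1.mul l2).sub (l3.pow 2)) ((l1.mul l4).const_mul (1 / μ^2)) fun n => ?_
  refine PW.poinc_smooth a b μ hab hμ hμL (D (δ n) F) (D (δ n) F1) (D (δ n) V) φ φ1 (dD _ _ _ dF) (dD _ _ _ dF1) ?_ ?_ hφ hφ1
  · simp only [hD]; fun_prop
  · intro x hx
    have := hV2 x hx (δ n) (δpos n) (δlt n)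
    exact div_nonneg this (by positivity)


theorem PW.poinc_logconc (a b : ℝ) (hab : a < b) (ρ φ φ1 : ℝ → ℝ)
    (hpos : ∀ s ∈ Set.Ioo a b, 0 < ρ s)
    (hlc : ∀ s ∈ Set.Ioo a b, ∀ r ∈ Set.Ioo a b, ∀ t, 0 < t → t < 1 →
      ρ s ^ (1-t) * ρ r ^ t ≤ ρ ((1-t)*s + t*r))
    (hint : IntegrableOn ρ (Set.Ioo a b))
    (hφ : ∀ x, HasDerivAt φ (φ1 x) x) (hφ1 : Continuous φ1) :
    (∫ x in Set.Ioo a b, ρ x) * (∫ x in Set.Ioo a b, φ x ^ 2 * ρ x)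
      - (∫ x in Set.Ioo a b, φ x * ρ x) ^ 2 ≤
    ((b - a) / Real.pi) ^ 2 * ((∫ x in Set.Ioo a b, ρ x) * (∫ x in Set.Ioo a b, φ1 x ^ 2 * ρ x)) := by
  have cφ : Continuous φ := continuous_iff_continuousAt.2 fun x => (hφ x).continuousAt
  set V : ℝ → ℝ := fun s => - Real.log (ρ s) with hV
  have Vconv : ConvexOn ℝ (Set.Ioo a b) V := by
    rw [convexOn_iff_forall_pos]
    refine ⟨convex_Ioo a b, ?_⟩
    intro x hx y hy p q hp hq hpq
    have h1 := hlc x hx y hy q hq (by linarith)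
    have hp' : 1 - q = p := by linarith
    rw [hp'] at h1
    have h2 := Real.log_le_log (mul_pos (Real.rpow_pos_of_pos (hpos x hx) _) (Real.rpow_pos_of_pos (hpos y hy) _)) h1
    rw [Real.log_mul (Real.rpow_pos_of_pos (hpos x hx) _).ne' (Real.rpow_pos_of_pos (hpos y hy) _).ne',
      Real.log_rpow (hpos x hx), Real.log_rpow (hpos y hy)] at h2
    simp only [hV, smul_eq_mul]
    linarith
  have Vcont : ContinuousOn V (Set.Ioo a b) := Vconv.continuousOn isOpen_Ioo
  have Vexp : ∀ s ∈ Set.Ioo a b, Real.exp (-V s) = ρ s := by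
    intro s hs
    simp [hV, Real.exp_log (hpos s hs)]
  -- compact version
  have comp : ∀ ε, 0 < ε → 2 * ε < b - a →
    (∫ x in (a+ε)..(b-ε), ρ x) * (∫ x in (a+ε)..(b-ε), φ x ^ 2 * ρ x)
      - (∫ x in (a+ε)..(b-ε), φ x * ρ x) ^ 2 ≤
    ((b - a) / Real.pi) ^ 2 * ((∫ x in (a+ε)..(b-ε), ρ x) * (∫ x in (a+ε)..(b-ε), φ1 x ^ 2 * ρ x)) := by
    intro ε hε hε2
    have hle : a + ε ≤ b - ε/2 := by linarith
    set W : ℝ → ℝ := Set.IccExtend hle (fun x => V x) with hW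
    have cW : Continuous W := by
      apply Continuous.Icc_extend'
      have : ContinuousOn V (Set.Icc (a+ε) (b-ε/2)) := Vcont.mono fun x hx => ⟨by linarith [hx.1], by linarith [hx.2]⟩
      exact this.domRestrict
    have WV : ∀ x ∈ Set.Icc (a+ε) (b-ε/2), W x = V x := fun x hx => by
      rw [hW, Set.IccExtend_of_mem _ _ hx]
    have key := PW.poinc_cont (a+ε) (b-ε) (Real.pi/(b-a)) (ε/4) (by linarith)
      (div_pos Real.pi_pos (by linarith)) ?_ (by linarith) W φ φ1 cW ?_ hφ hφ1
    · have e : ∀ ψ : ℝ → ℝ, ∫ x in (a+ε)..(b-ε), ψ x * Real.exp (-W x) = ∫ x in (a+ε)..(b-ε), ψ x * ρ x := by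
        intro ψ
        apply intervalIntegral.integral_congr
        intro x hx
        rw [Set.uIcc_of_le (by linarith)] at hx
        simp only
        rw [WV x ⟨hx.1, by linarith [hx.2]⟩, Vexp x ⟨by linarith [hx.1], by linarith [hx.2]⟩]
      have e0 := e (fun _ => 1)
      simp only [one_mul] at e0
      rw [e0, e φ, e (fun x => φ x ^ 2), e (fun x => φ1 x ^ 2)] at key
      convert key using 2
      have := Real.pi_pos
      have : b - a ≠ 0 := by linarith
      field_simp
    · have : 0 < b - a := by linarith
      rw [div_mul_eq_mul_div, div_lt_iff₀ this]
      apply mul_lt_mul_of_pos_left _ Real.pi_pos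
      linarith
    · intro x hx δ hδ hδ2
      have m1 : x ∈ Set.Icc (a+ε) (b-ε/2) := ⟨hx.1, by linarith [hx.2]⟩
      have m2 : x+δ ∈ Set.Icc (a+ε) (b-ε/2) := ⟨by linarith [hx.1], by linarith [hx.2]⟩
      have m3 : x+δ+δ ∈ Set.Icc (a+ε) (b-ε/2) := ⟨by linarith [hx.1], by linarith [hx.2]⟩
      rw [WV _ m1, WV _ m2, WV _ m3]
      have sub : Set.Icc (a+ε) (b-ε/2) ⊆ Set.Ioo a b := fun x hx => ⟨by linarith [hx.1], by linarith [hx.2]⟩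
      have := Vconv.2 (sub m1) (sub m3) (show (0:ℝ) ≤ 1/2 by norm_num) (show (0:ℝ) ≤ 1/2 by norm_num) (by norm_num)
      have e : (1/2 : ℝ) • x + (1/2 : ℝ) • (x+δ+δ) = x + δ := by simp; ring
      rw [e] at this
      simp only [smul_eq_mul] at this
      linarith
  set ε : ℕ → ℝ := fun n => (b-a) / (n+3) with hε
  have εpos : ∀ n, 0 < ε n := fun n => div_pos (by linarith) (by positivity)
  have εlt : ∀ n, 2 * ε n < b - a := fun n => by
    simp only [hε]
    rw [mul_div_assoc', div_lt_iff₀ (by positivity)]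
    have : (0:ℝ) ≤ n := by positivity
    nlinarith
  have εlim : Filter.Tendsto ε Filter.atTop (nhds 0) := by
    have h := (tendsto_const_div_atTop_nhds_zero_nat (b-a)).comp (Filter.tendsto_add_atTop_nat 3)
    refine h.congr fun n => ?_
    simp [hε]
  have lim : ∀ ψ : ℝ → ℝ, Continuous ψ → Filter.Tendsto (fun n => ∫ x in (a+ε n)..(b-ε n), ψ x * ρ x)
      Filter.atTop (nhds (∫ x in Set.Ioo a b, ψ x * ρ x)) := by
    intro ψ cψ
    have i1 : IntegrableOn (fun x => ψ x * ρ x) (Set.Ioo a b) := by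
      obtain ⟨B, hB⟩ := (isCompact_Icc (a := a) (b := b)).exists_bound_of_continuousOn cψ.continuousOn
      refine Integrable.bdd_mul hint cψ.aestronglyMeasurable (c := B) ?_
      refine (ae_restrict_iff' measurableSet_Ioo).2 (.of_forall fun x hx => hB x ⟨hx.1.le, hx.2.le⟩)
    have i2 : IntervalIntegrable (fun x => ψ x * ρ x) volume a b := by
      rw [intervalIntegrable_iff_integrableOn_Ioo_of_le hab.le]; exact i1
    have c1 := intervalIntegral.continuousOn_primitive_interval' i2 (Set.left_mem_uIcc)
    rw [Set.uIcc_of_le hab.le] at c1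
    have t1 : Filter.Tendsto (fun n => ∫ x in a..(b-ε n), ψ x * ρ x) Filter.atTop (nhds (∫ x in a..b, ψ x * ρ x)) := by
      refine (c1 b ⟨hab.le, le_rfl⟩).tendsto.comp ?_
      rw [tendsto_nhdsWithin_iff]
      refine ⟨by simpa using (tendsto_const_nhds (x := b)).sub εlim, .of_forall fun n => ⟨by linarith [εpos n, εlt n], by linarith [εpos n, εlt n]⟩⟩
    have t2 : Filter.Tendsto (fun n => ∫ x in a..(a+ε n), ψ x * ρ x) Filter.atTop (nhds (∫ x in a..a, ψ x * ρ x)) := by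
      refine (c1 a ⟨le_rfl, hab.le⟩).tendsto.comp ?_
      rw [tendsto_nhdsWithin_iff]
      refine ⟨by simpa using (tendsto_const_nhds (x := a)).add εlim, .of_forall fun n => ⟨by linarith [εpos n, εlt n], by linarith [εpos n, εlt n]⟩⟩
    have t3 := t1.sub t2
    rw [intervalIntegral.integral_same, sub_zero, intervalIntegral.integral_of_le hab.le, integral_Ioc_eq_integral_Ioo] at t3
    refine t3.congr fun n => ?_
    apply intervalIntegral.integral_interval_sub_left
    · apply i2.mono_set
      rw [Set.uIcc_of_le hab.le, Set.uIcc_of_le (by linarith [εpos n, εlt n])]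
      exact Set.Icc_subset_Icc le_rfl (by linarith [εpos n, εlt n])
    · apply i2.mono_set
      rw [Set.uIcc_of_le hab.le, Set.uIcc_of_le (by linarith [εpos n, εlt n])]
      exact Set.Icc_subset_Icc le_rfl (by linarith [εpos n, εlt n])
  have l1 := lim (fun _ => 1) continuous_const
  have l2 := lim (fun x => φ x ^ 2) (by fun_prop)
  have l3 := lim φ cφ
  have l4 := lim (fun x => φ1 x ^ 2) (by fun_prop)
  simp only [one_mul] at l1
  exact le_of_tendsto_of_tendsto' ((l1.mul l2).sub (l3.pow 2)) ((l1.mul l4).const_mul _) fun n => comp (ε n) (εpos n) (εlt n)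


theorem PW.open_conv_Ioo (I : Set ℝ) (ho : IsOpen I) (hc : Convex ℝ I) (hb : Bornology.IsBounded I) (hn : I.Nonempty) :
    ∃ a b, a < b ∧ I = Set.Ioo a b := by
  have hI : I = Set.Ioo (sInf I) (sSup I) := by
    apply Set.Subset.antisymm
    · intro x hx
      obtain ⟨ε, hε, hball⟩ := Metric.isOpen_iff.1 ho x hx
      have h1 : x - ε/2 ∈ I := hball (by simp [abs_of_pos hε]; exact hε)
      have h2 : x + ε/2 ∈ I := hball (by simp [abs_of_pos hε]; exact hε)
      have := csInf_le hb.bddBelow h1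
      have := le_csSup hb.bddAbove h2
      constructor <;> linarith
    · exact IsConnected.Ioo_csInf_csSup_subset ⟨hn, hc.isPreconnected⟩ hb.bddBelow hb.bddAbove
  obtain ⟨x, hx⟩ := hn
  refine ⟨_, _, ?_, hI⟩
  rw [hI] at hx
  exact hx.1.trans hx.2

theorem PW.exists_equiv (n : ℕ) (e : EuclideanSpace ℝ (Fin (n+1))) (he : ‖e‖ = 1) :
    ∃ Ψ : ℝ × (Fin n → ℝ) ≃ᵐ EuclideanSpace ℝ (Fin (n+1)), MeasurePreserving Ψ ∧ Continuous Ψ ∧ Continuous Ψ.symm ∧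
      (∀ (a b : ℝ) p q, Ψ (a • p + b • q) = a • Ψ p + b • Ψ q) ∧ ∀ p, inner ℝ e (Ψ p) = p.1 := by
  obtain ⟨b, hb⟩ := Orthonormal.exists_orthonormalBasis_extension_of_card_eq (𝕜 := ℝ) (E := EuclideanSpace ℝ (Fin (n+1)))
    (ι := Fin (n+1)) (by simp) (v := fun _ => e) (s := {0}) (by
      rw [orthonormal_iff_ite]
      rintro ⟨i, hi⟩ ⟨j, hj⟩
      rw [Set.mem_singleton_iff] at hi hj
      subst hi hj
      simp [he])
  have hb0 : b 0 = e := hb 0 (by simp)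
  refine ⟨((MeasurableEquiv.piFinSuccAbove (fun _ : Fin (n+1) => ℝ) 0).symm.trans (MeasurableEquiv.toLp 2 _)).trans b.measurableEquiv.symm, ?_, ?_, ?_, ?_, ?_⟩
  · exact (b.measurePreserving_measurableEquiv.symm).comp ((PiLp.volume_preserving_toLp _).comp (volume_preserving_piFinSuccAbove (fun _ : Fin (n + 1) => ℝ) 0).symm)
  · have : Continuous (fun p : ℝ × (Fin n → ℝ) => b.repr.symm (WithLp.toLp 2 (Fin.cons p.1 p.2 : Fin (n+1) → ℝ))) := by
      fun_prop
    convert this using 1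
    ext p : 1
    simp [MeasurableEquiv.piFinSuccAbove, Fin.insertNthEquiv, Fin.insertNth_zero', OrthonormalBasis.measurableEquiv]
  · have : Continuous (fun x => ((b.repr x 0, fun i : Fin n => b.repr x i.succ) : ℝ × (Fin n → ℝ))) := by
      fun_prop
    exact this
  · intro r s p q
    simp [MeasurableEquiv.piFinSuccAbove, Fin.insertNthEquiv, Fin.insertNth_zero', OrthonormalBasis.measurableEquiv]
    rw [← map_smul, ← map_smul, ← map_add]
    congr 1
    ext i
    refine Fin.cases ?_ (fun i => ?_) i <;> simp
  · intro p
    simp [MeasurableEquiv.piFinSuccAbove, Fin.insertNthEquiv, Fin.insertNth_zero', OrthonormalBasis.measurableEquiv]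
    rw [← hb0, ← OrthonormalBasis.repr_apply_apply]
    simp

theorem PW.needle (n : ℕ) (K : Set (EuclideanSpace ℝ (Fin (n+1)))) (hconv : Convex ℝ K) (hopen : IsOpen K)
    (hbdd : Bornology.IsBounded K) (hne : K.Nonempty) (e : EuclideanSpace ℝ (Fin (n+1))) (he : ‖e‖ = 1)
    (φ φ1 : ℝ → ℝ) (hφ : ∀ x, HasDerivAt φ (φ1 x) x) (hφ1 : Continuous φ1) :
    (volume.real K) * (∫ x in K, φ (inner ℝ e x) ^ 2) - (∫ x in K, φ (inner ℝ e x)) ^ 2 ≤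
      (Metric.diam K / Real.pi) ^ 2 * ((volume.real K) * ∫ x in K, φ1 (inner ℝ e x) ^ 2) := by
  have cφ : Continuous φ := continuous_iff_continuousAt.2 fun x => (hφ x).continuousAt
  obtain ⟨Ψ, hmp, hcont, hcont', hlin, hin⟩ := PW.exists_equiv n e he
  set K' := Ψ ⁻¹' K with hK'
  have K'open : IsOpen K' := hopen.preimage hcont
  have K'conv : Convex ℝ K' := by
    intro p hp q hq a b ha hb hab
    show Ψ _ ∈ K
    rw [hlin]
    exact hconv hp hq ha hb hab
  have volK : volume K < ∞ := hbdd.measure_lt_top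
  have volK' : volume K' < ∞ := by
    rw [hK', hmp.measure_preimage hopen.measurableSet.nullMeasurableSet]; exact volK
  set T : EuclideanSpace ℝ (Fin (n+1)) → ℝ := fun x => inner ℝ e x with hT
  have lipT : LipschitzWith 1 T := by
    apply LipschitzWith.of_dist_le_mul
    intro x y
    rw [Real.dist_eq, hT]
    simp only
    rw [← inner_sub_right, dist_eq_norm]
    have := abs_real_inner_le_norm e (x - y)
    rw [he] at this
    simpa using this
  have Tfst : T '' K = Prod.fst '' K' := by
    ext s
    constructor
    · rintro ⟨x, hx, rfl⟩
      refine ⟨Ψ.symm x, by simpa [hK'] using hx, ?_⟩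
      rw [← hin]; simp [hT]
    · rintro ⟨p, hp, rfl⟩
      exact ⟨Ψ p, hp, hin p⟩
  obtain ⟨a, b, hab, hI⟩ := PW.open_conv_Ioo (T '' K) (by rw [Tfst]; exact isOpenMap_fst _ K'open)
    (by
      rw [Tfst]
      exact K'conv.is_linear_image (IsLinearMap.mk (by simp) (by simp)))
    (lipT.isBounded_image hbdd) (hne.image _)
  have hlen : b - a ≤ Metric.diam K := by
    have := lipT.diam_image_le K hbdd
    rw [hI, Real.diam_Ioo hab.le] at this
    simpa using this
  set ρ : ℝ → ℝ := fun s => (volume (Prod.mk s ⁻¹' K')).toReal with hρ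
  have secmeas : ∀ s : ℝ, MeasurableSet (Prod.mk s ⁻¹' K') := fun s => measurable_prodMk_left K'open.measurableSet
  have K'bdd : ∃ R, ∀ p ∈ K', ‖p.2‖ ≤ R := by
    have hc : IsCompact (Ψ.symm '' (closure K)) := hbdd.isCompact_closure.image hcont'
    obtain ⟨R, hR⟩ := hc.isBounded.exists_norm_le
    refine ⟨R, fun p hp => (norm_snd_le p).trans (hR p ⟨Ψ p, subset_closure hp, by simp⟩)⟩
  have secfin : ∀ s : ℝ, volume (Prod.mk s ⁻¹' K') < ∞ := by
    obtain ⟨R, hR⟩ := K'bdd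
    intro s
    refine lt_of_le_of_lt (measure_mono (t := Metric.closedBall 0 R) ?_) (isCompact_closedBall _ _).measure_lt_top
    intro y hy
    simpa using hR _ hy
  have trans : ∀ ψ : ℝ → ℝ, Continuous ψ → IntegrableOn (fun s => ψ s * ρ s) (Set.Ioo a b) ∧
      ∫ x in K, ψ (T x) = ∫ s in Set.Ioo a b, ψ s * ρ s := by
    intro ψ cψ
    have i0 : IntegrableOn (fun x => ψ (T x)) K := by
      have : ContinuousOn (fun x => ψ (T x)) (closure K) := (cψ.comp lipT.continuous).continuousOn
      exact (this.integrableOn_compact hbdd.isCompact_closure).mono_set subset_closure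
    have i1 : IntegrableOn (fun p : ℝ × (Fin n → ℝ) => ψ p.1) K' := by
      have := (hmp.integrableOn_comp_preimage Ψ.measurableEmbedding).2 i0
      refine this.congr_fun ?_ K'open.measurableSet
      intro p _
      simp [hT, hin]
    have i2 : Integrable (K'.indicator (fun p : ℝ × (Fin n → ℝ) => ψ p.1)) (volume.prod volume) := by
      rw [← Measure.volume_eq_prod]
      exact i1.integrable_indicator K'open.measurableSet
    have e1 : ∫ x in K, ψ (T x) = ∫ p in K', ψ p.1 := by
      rw [← hmp.setIntegral_preimage_emb Ψ.measurableEmbedding]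
      simp [hT, hin, hK']
    have sec : ∀ s, ∫ y, K'.indicator (fun p : ℝ × (Fin n → ℝ) => ψ p.1) (s, y) = ψ s * ρ s := by
      intro s
      have : (fun y => K'.indicator (fun p : ℝ × (Fin n → ℝ) => ψ p.1) (s, y)) = (Prod.mk s ⁻¹' K').indicator (fun _ => ψ s) := by
        ext y
        simp [Set.indicator]
        rfl
      rw [this, integral_indicator (secmeas s), setIntegral_const]
      simp [hρ, mul_comm, Measure.real]
    have zero : ∀ s, s ∉ Set.Ioo a b → ψ s * ρ s = 0 := by
      intro s hs
      rw [← hI, Tfst] at hs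
      have : Prod.mk s ⁻¹' K' = ∅ := by
        ext y
        simp only [Set.mem_preimage, Set.mem_empty_iff_false, iff_false]
        exact fun h => hs ⟨_, h, rfl⟩
      simp [hρ, this]
    have i3 := i2.integral_prod_left
    simp only [sec] at i3
    refine ⟨i3.integrableOn, ?_⟩
    rw [e1, ← integral_indicator K'open.measurableSet, Measure.volume_eq_prod, integral_prod _ i2]
    simp only [sec]
    rw [setIntegral_eq_integral_of_forall_compl_eq_zero zero]
  have key := PW.poinc_logconc a b hab ρ φ φ1 ?_ ?_ ?_ hφ hφ1
  · have t0 := (trans (fun _ => 1) continuous_const).2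
    have t1 := (trans φ cφ).2
    have t2 := (trans (fun s => φ s ^ 2) (by fun_prop)).2
    have t3 := (trans (fun s => φ1 s ^ 2) (by fun_prop)).2
    simp only [one_mul] at t0
    have t0' : volume.real K = ∫ s in Set.Ioo a b, ρ s := by rw [← t0]; simp
    rw [t0', t1, t2, t3]
    refine key.trans ?_
    have h0 : 0 ≤ (∫ s in Set.Ioo a b, ρ s) * ∫ s in Set.Ioo a b, φ1 s ^ 2 * ρ s := by
      apply mul_nonneg
      · exact integral_nonneg fun s => ENNReal.toReal_nonneg
      · exact integral_nonneg fun s => mul_nonneg (sq_nonneg _) ENNReal.toReal_nonneg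
    apply mul_le_mul_of_nonneg_right _ h0
    have := Real.pi_pos
    have : 0 ≤ b - a := by linarith
    gcongr
  · intro s hs
    apply ENNReal.toReal_pos _ (secfin s).ne
    rw [← hI, Tfst] at hs
    obtain ⟨p, hp, rfl⟩ := hs
    have o : IsOpen (Prod.mk p.1 ⁻¹' K') := K'open.preimage (by fun_prop)
    exact (o.measure_pos volume ⟨p.2, hp⟩).ne'
  · intro s hs r hr t ht0 ht1
    have := PW.section_logconcave n K' K'conv K'open.measurableSet t ht0 ht1 s r
    simp only [hρ]
    rw [ENNReal.toReal_rpow, ENNReal.toReal_rpow, ← ENNReal.toReal_mul]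
    exact ENNReal.toReal_mono (secfin _).ne this
  · have := (trans (fun _ => 1) continuous_const).1
    simpa using this


theorem PW.hyper_null (d : ℕ) (i j : Fin d) (hij : i ≠ j) (a b p q : ℝ) (hpq : p ≠ 0 ∨ q ≠ 0) :
    volume {x : EuclideanSpace ℝ (Fin d) | p * (x i - a) + q * (x j - b) = 0} = 0 := by
  let L : EuclideanSpace ℝ (Fin d) →ₗ[ℝ] ℝ := p • (EuclideanSpace.proj i : EuclideanSpace ℝ (Fin d) →L[ℝ] ℝ).toLinearMap
    + q • (EuclideanSpace.proj j : EuclideanSpace ℝ (Fin d) →L[ℝ] ℝ).toLinearMap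
  have hL : ∀ x, L x = p * x i + q * x j := fun x => by simp [L]
  have hL0 : L ≠ 0 := by
    intro h
    rcases hpq with h' | h'
    · have := hL (EuclideanSpace.single i 1)
      rw [h] at this
      simp [hij.symm] at this
      exact h' this.symm
    · have := hL (EuclideanSpace.single j 1)
      rw [h] at this
      simp [hij] at this
      exact h' this.symm
  have hset : {x : EuclideanSpace ℝ (Fin d) | p * (x i - a) + q * (x j - b) = 0} = L ⁻¹' {p * a + q * b} := by
    ext x
    simp only [Set.mem_setOf_eq, Set.mem_preimage, Set.mem_singleton_iff, hL]
    constructor <;> intro h <;> linarith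
  rw [hset]
  by_cases hn : (L ⁻¹' {p * a + q * b}).Nonempty
  · obtain ⟨x0, hx0⟩ := hn
    have : L ⁻¹' {p * a + q * b} = (AffineSubspace.mk' x0 (LinearMap.ker L) : Set _) := by
      ext x
      simp only [Set.mem_preimage, Set.mem_singleton_iff, SetLike.mem_coe, AffineSubspace.mem_mk', LinearMap.mem_ker, vsub_eq_sub, map_sub] at hx0 ⊢
      rw [hx0, sub_eq_zero]
    rw [this]
    apply Measure.addHaar_affineSubspace
    intro h
    have := congrArg AffineSubspace.direction h
    rw [AffineSubspace.direction_mk', AffineSubspace.direction_top, LinearMap.ker_eq_top] at this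
    exact hL0 this
  · rw [Set.not_nonempty_iff_eq_empty] at hn
    rw [hn]; simp

theorem PW.bisect (d : ℕ) (K : Set (EuclideanSpace ℝ (Fin d))) (hconv : Convex ℝ K) (hopen : IsOpen K)
    (f g : EuclideanSpace ℝ (Fin d) → ℝ) (hf : IntegrableOn f K) (hg : IntegrableOn g K)
    (hf0 : ∫ x in K, f x = 0) (hg0 : 0 < ∫ x in K, g x) (i j : Fin d) (hij : i ≠ j) (a b : ℝ) :
    ∃ K' ⊆ K, Convex ℝ K' ∧ IsOpen K' ∧ ∫ x in K', f x = 0 ∧ 0 < ∫ x in K', g x ∧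
      ∃ p q : ℝ, (p ≠ 0 ∨ q ≠ 0) ∧ ∀ x ∈ K', 0 ≤ p * (x i - a) + q * (x j - b) := by
  set ℓ : ℝ → EuclideanSpace ℝ (Fin d) → ℝ := fun θ x => Real.cos θ * (x i - a) + Real.sin θ * (x j - b) with hℓ
  have cℓ : ∀ θ, Continuous (ℓ θ) := fun θ => by simp only [hℓ]; fun_prop
  have nz : ∀ θ, Real.cos θ ≠ 0 ∨ Real.sin θ ≠ 0 := by
    intro θ
    by_contra! h
    have := Real.cos_sq_add_sin_sq θ
    rw [h.1, h.2] at this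
    norm_num at this
  have hnull : ∀ θ, ∀ᵐ x, ℓ θ x ≠ 0 := fun θ => by
    have := PW.hyper_null d i j hij a b _ _ (nz θ)
    rw [ae_iff]
    simpa [hℓ] using this
  have oU : ∀ θ, IsOpen {x | 0 < ℓ θ x} := fun θ => isOpen_lt continuous_const (cℓ θ)
  have oU' : ∀ θ, IsOpen {x | ℓ θ x < 0} := fun θ => isOpen_lt (cℓ θ) continuous_const
  set G : ℝ → ℝ := fun θ => ∫ x in K, {x | 0 < ℓ θ x}.indicator f x with hG
  have split : ∀ θ (u : EuclideanSpace ℝ (Fin d) → ℝ), IntegrableOn u K →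
      ∫ x in K, u x = (∫ x in K ∩ {x | 0 < ℓ θ x}, u x) + ∫ x in K ∩ {x | ℓ θ x < 0}, u x := by
    intro θ u hu
    rw [← setIntegral_union]
    · apply setIntegral_congr_set
      have : ∀ᵐ x, x ∈ K ↔ x ∈ K ∩ {x | 0 < ℓ θ x} ∪ K ∩ {x | ℓ θ x < 0} := by
        filter_upwards [hnull θ] with x hx
        simp only [Set.mem_union, Set.mem_inter_iff, Set.mem_setOf_eq]
        rcases lt_or_gt_of_ne hx with h | h <;> tauto
      filter_upwards [this] with x hx
      exact propext hx
    · rw [Set.disjoint_left]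
      rintro x ⟨_, h1⟩ ⟨_, h2⟩
      have h1' : 0 < ℓ θ x := h1
      have h2' : ℓ θ x < 0 := h2
      exact lt_asymm h1' h2'
    · exact (hopen.inter (oU' θ)).measurableSet
    · exact hu.mono_set Set.inter_subset_left
    · exact hu.mono_set Set.inter_subset_left
  have G_eq : ∀ θ, G θ = ∫ x in K ∩ {x | 0 < ℓ θ x}, f x := fun θ => by
    simp only [hG]
    rw [setIntegral_indicator (oU θ).measurableSet]
  have Gpi : G Real.pi = - G 0 := by
    have h := split 0 f hf
    rw [hf0] at h
    have e : {x | 0 < ℓ Real.pi x} = {x | ℓ 0 x < 0} := by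
      ext x; simp [hℓ]
    rw [G_eq, G_eq, e]
    linarith
  have cG : Continuous G := by
    rw [continuous_iff_continuousAt]
    intro θ
    apply continuousAt_of_dominated (bound := fun x => ‖f x‖)
    · exact .of_forall fun θ => hf.aestronglyMeasurable.indicator (oU θ).measurableSet
    · exact .of_forall fun θ => .of_forall fun x => norm_indicator_le_norm_self _ _
    · exact hf.norm
    · apply ae_restrict_of_ae
      filter_upwards [hnull θ] with x hx
      have cx : Continuous (fun θ => ℓ θ x) := by simp only [hℓ]; fun_prop
      rcases lt_or_gt_of_ne hx with h | h
      · have : ∀ᶠ t in nhds θ, ℓ t x < 0 := cx.continuousAt.eventually_lt continuousAt_const h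
        apply ContinuousAt.congr (f := fun _ => (0:ℝ)) continuousAt_const
        filter_upwards [this] with t ht
        simp [Set.indicator, ht.not_gt]
      · have : ∀ᶠ t in nhds θ, 0 < ℓ t x := continuousAt_const.eventually_lt cx.continuousAt h
        apply ContinuousAt.congr (f := fun _ => f x) continuousAt_const
        filter_upwards [this] with t ht
        simp [Set.indicator, ht]
  obtain ⟨θ, hθ⟩ : ∃ θ, G θ = 0 := by
    rcases le_total (G 0) 0 with h | h
    · have := intermediate_value_Icc Real.pi_pos.le cG.continuousOn (show (0:ℝ) ∈ Set.Icc (G 0) (G Real.pi) from ⟨h, by linarith⟩)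
      obtain ⟨θ, _, h⟩ := this
      exact ⟨θ, h⟩
    · have := intermediate_value_Icc' Real.pi_pos.le cG.continuousOn (show (0:ℝ) ∈ Set.Icc (G Real.pi) (G 0) from ⟨by linarith, h⟩)
      obtain ⟨θ, _, h⟩ := this
      exact ⟨θ, h⟩
  have hfp : ∫ x in K ∩ {x | 0 < ℓ θ x}, f x = 0 := by rw [← G_eq, hθ]
  have hfm : ∫ x in K ∩ {x | ℓ θ x < 0}, f x = 0 := by
    have := split θ f hf
    linarith
  have hgs := split θ g hg
  have convp : Convex ℝ {x | 0 < ℓ θ x} := by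
    intro x hx y hy s t hs ht hst
    simp only [hℓ, Set.mem_setOf_eq, PiLp.add_apply, PiLp.smul_apply, smul_eq_mul] at hx hy ⊢
    rcases hs.eq_or_lt with h | h
    · have : t = 1 := by linarith
      subst h this; simpa using hy
    · have := mul_pos h hx
      have := mul_nonneg ht hy.le
      have e : s = 1 - t := by linarith
      calc 0 < s * (Real.cos θ * (x i - a) + Real.sin θ * (x j - b)) + t * (Real.cos θ * (y i - a) + Real.sin θ * (y j - b)) := by linarith
        _ = _ := by rw [e]; ring
  have convm : Convex ℝ {x | ℓ θ x < 0} := by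
    intro x hx y hy s t hs ht hst
    simp only [hℓ, Set.mem_setOf_eq, PiLp.add_apply, PiLp.smul_apply, smul_eq_mul] at hx hy ⊢
    rcases hs.eq_or_lt with h | h
    · have : t = 1 := by linarith
      subst h this; simpa using hy
    · have := mul_neg_of_pos_of_neg h hx
      have := mul_nonpos_of_nonneg_of_nonpos ht hy.le
      have e : s = 1 - t := by linarith
      calc _ = s * (Real.cos θ * (x i - a) + Real.sin θ * (x j - b)) + t * (Real.cos θ * (y i - a) + Real.sin θ * (y j - b)) := by rw [e]; ring
        _ < 0 := by linarith
  rcases lt_or_ge 0 (∫ x in K ∩ {x | 0 < ℓ θ x}, g x) with h | h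
  · refine ⟨_, Set.inter_subset_left, hconv.inter convp, hopen.inter (oU θ), hfp, h, Real.cos θ, Real.sin θ, nz θ, ?_⟩
    intro x hx
    exact hx.2.le
  · refine ⟨_, Set.inter_subset_left, hconv.inter convm, hopen.inter (oU' θ), hfm, by linarith, -Real.cos θ, -Real.sin θ, by simpa using nz θ, ?_⟩
    intro x hx
    have : ℓ θ x < 0 := hx.2
    simp only [hℓ] at this
    linarith


theorem PW.rat_pt (x1 x2 u1 u2 w1 w2 : ℝ) (hD : u1 * w2 - u2 * w1 ≠ 0) :
    ∃ a b : ℚ, ∃ s t : ℝ, 0 < s ∧ 0 < t ∧ s + t < 1 ∧ (a:ℝ) = x1 + s * u1 + t * w1 ∧ (b:ℝ) = x2 + s * u2 + t * w2 := by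
  set D := u1 * w2 - u2 * w1 with hDd
  let S : ℝ × ℝ → ℝ := fun z => ((z.1 - x1) * w2 - (z.2 - x2) * w1) / D
  let T : ℝ × ℝ → ℝ := fun z => (u1 * (z.2 - x2) - u2 * (z.1 - x1)) / D
  have cS : Continuous S := by simp only [S]; fun_prop
  have cT : Continuous T := by simp only [T]; fun_prop
  have hO : IsOpen ({z | 0 < S z} ∩ ({z | 0 < T z} ∩ {z | S z + T z < 1})) :=
    (isOpen_lt continuous_const cS).inter ((isOpen_lt continuous_const cT).inter (isOpen_lt (cS.add cT) continuous_const))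
  have hd : DenseRange (Prod.map (fun q : ℚ => (q:ℝ)) (fun q : ℚ => (q:ℝ))) := Rat.denseRange_cast.prodMap Rat.denseRange_cast
  obtain ⟨⟨a, b⟩, h1, h2, h3⟩ := hd.exists_mem_open hO (by
    refine ⟨(x1 + (1/3) * u1 + (1/3) * w1, x2 + (1/3) * u2 + (1/3) * w2), ?_⟩
    have e1 : S (x1 + (1/3) * u1 + (1/3) * w1, x2 + (1/3) * u2 + (1/3) * w2) = 1/3 := by
      simp only [S]; rw [div_eq_iff hD, hDd]; ring
    have e2 : T (x1 + (1/3) * u1 + (1/3) * w1, x2 + (1/3) * u2 + (1/3) * w2) = 1/3 := by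
      simp only [T]; rw [div_eq_iff hD, hDd]; ring
    simp only [Set.mem_inter_iff, Set.mem_setOf_eq, e1, e2]
    norm_num)
  refine ⟨a, b, _, _, h1, h2, h3, ?_, ?_⟩
  · simp only [S, T, Prod.map]; field_simp; rw [hDd]; ring
  · simp only [S, T, Prod.map]; field_simp; rw [hDd]; ring

theorem PW.no_tri (x1 x2 u1 u2 w1 w2 : ℝ) (hD : u1 * w2 - u2 * w1 ≠ 0) (a b s t : ℝ) (hs : 0 < s) (ht : 0 < t)
    (hst : s + t < 1) (ha : a = x1 + s * u1 + t * w1) (hb : b = x2 + s * u2 + t * w2) (p q : ℝ) (hpq : p ≠ 0 ∨ q ≠ 0)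
    (hx : 0 ≤ p * (x1 - a) + q * (x2 - b)) (hy : 0 ≤ p * (x1 + u1 - a) + q * (x2 + u2 - b))
    (hz : 0 ≤ p * (x1 + w1 - a) + q * (x2 + w2 - b)) : False := by
  set X := p * (x1 - a) + q * (x2 - b) with hX
  have e1 : p * (x1 + u1 - a) + q * (x2 + u2 - b) = X + (p * u1 + q * u2) := by rw [hX]; ring
  have e2 : p * (x1 + w1 - a) + q * (x2 + w2 - b) = X + (p * w1 + q * w2) := by rw [hX]; ring
  rw [e1] at hy
  rw [e2] at hz
  have e3 : X + s * (p * u1 + q * u2) + t * (p * w1 + q * w2) = 0 := by rw [hX, ha, hb]; ring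
  have m1 := mul_nonneg hs.le hy
  have m2 := mul_nonneg ht.le hz
  have m3 := mul_nonneg (sub_nonneg.2 hst.le) hx
  have X0 : X = 0 := by
    have : (1 - (s+t)) * X = 0 := by nlinarith
    rcases mul_eq_zero.1 this with h | h
    · linarith
    · exact h
  rw [X0] at hy hz m1 m2 e3
  have U0 : p * u1 + q * u2 = 0 := by
    have : s * (p * u1 + q * u2) = 0 := by nlinarith
    rcases mul_eq_zero.1 this with h | h
    · linarith
    · exact h
  have W0 : p * w1 + q * w2 = 0 := by
    have : t * (p * w1 + q * w2) = 0 := by nlinarith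
    rcases mul_eq_zero.1 this with h | h
    · linarith
    · exact h
  have P0 : p * (u1 * w2 - u2 * w1) = 0 := by linear_combination w2 * U0 - u2 * W0
  have Q0 : q * (u1 * w2 - u2 * w1) = 0 := by linear_combination u1 * W0 - w1 * U0
  rcases hpq with h | h
  · exact (mul_ne_zero h hD) P0
  · exact (mul_ne_zero h hD) Q0

theorem PW.line (n : ℕ) (C : Set (EuclideanSpace ℝ (Fin (n+1)))) (hne : C.Nonempty)
    (h : ∀ x ∈ C, ∀ y ∈ C, ∀ z ∈ C, ∀ i j, (y i - x i) * (z j - x j) - (y j - x j) * (z i - x i) = 0) :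
    ∃ p e : EuclideanSpace ℝ (Fin (n+1)), ‖e‖ = 1 ∧ ∀ x ∈ C, ∃ s : ℝ, x = p + s • e := by
  obtain ⟨x, hx⟩ := hne
  by_cases h1 : ∃ y ∈ C, y ≠ x
  · obtain ⟨y, hy, hyx⟩ := h1
    have hyx' : y - x ≠ 0 := sub_ne_zero.2 hyx
    refine ⟨x, ‖y - x‖⁻¹ • (y - x), by rw [norm_smul, norm_inv, norm_norm, inv_mul_cancel₀ (norm_ne_zero_iff.2 hyx')], ?_⟩
    intro z hz
    obtain ⟨i, hi⟩ : ∃ i, (y - x) i ≠ 0 := by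
      by_contra! hc
      exact hyx' (by ext i; simpa using hc i)
    refine ⟨(z i - x i) / (y i - x i) * ‖y - x‖, ?_⟩
    ext j
    have := h x hx y hy z hz i j
    have hi' : y i - x i ≠ 0 := by simpa using hi
    have hn : ‖y - x‖ ≠ 0 := norm_ne_zero_iff.2 hyx'
    simp
    field_simp
    linarith
  · push Not at h1
    refine ⟨x, EuclideanSpace.single 0 1, by simp, fun y hy => ⟨0, by simp [h1 y hy]⟩⟩

theorem PW.thin (n : ℕ) (K : Set (EuclideanSpace ℝ (Fin (n+1)))) (hconv : Convex ℝ K) (hopen : IsOpen K)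
    (hbdd : Bornology.IsBounded K)
    (f g : EuclideanSpace ℝ (Fin (n+1)) → ℝ) (hf : IntegrableOn f K) (hg : IntegrableOn g K)
    (hf0 : ∫ x in K, f x = 0) (hg0 : 0 < ∫ x in K, g x) (ε : ℝ) (hε : 0 < ε) :
    ∃ K' ⊆ K, Convex ℝ K' ∧ IsOpen K' ∧ ∫ x in K', f x = 0 ∧ 0 < ∫ x in K', g x ∧
      ∃ p e : EuclideanSpace ℝ (Fin (n+1)), ‖e‖ = 1 ∧ ∀ x ∈ K', ∃ s : ℝ, ‖x - (p + s • e)‖ < ε := by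
  let S := {K' : Set (EuclideanSpace ℝ (Fin (n+1))) // K' ⊆ K ∧ Convex ℝ K' ∧ IsOpen K' ∧ ∫ x in K', f x = 0 ∧ 0 < ∫ x in K', g x}
  have stepex : ∀ (c : Fin (n+1) × Fin (n+1) × ℚ × ℚ) (A : S), ∃ B : S, B.1 ⊆ A.1 ∧ (c.1 ≠ c.2.1 →
      ∃ p q : ℝ, (p ≠ 0 ∨ q ≠ 0) ∧ ∀ x ∈ B.1, 0 ≤ p * (x c.1 - (c.2.2.1 : ℝ)) + q * (x c.2.1 - (c.2.2.2:ℝ))) := by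
    rintro ⟨i, j, a, b⟩ ⟨A, hAK, hAc, hAo, hAf, hAg⟩
    by_cases hij : i = j
    · exact ⟨⟨A, hAK, hAc, hAo, hAf, hAg⟩, subset_rfl, fun h => absurd hij h⟩
    · obtain ⟨B, h1, h2, h3, h4, h5, h6⟩ := PW.bisect (n+1) A hAc hAo f g (hf.mono_set hAK) (hg.mono_set hAK) hAf hAg i j hij a b
      exact ⟨⟨B, h1.trans hAK, h2, h3, h4, h5⟩, h1, fun _ => h6⟩
  choose step hstep1 hstep2 using stepex
  obtain ⟨enum, henum⟩ := exists_surjective_nat (Fin (n+1) × Fin (n+1) × ℚ × ℚ)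
  let seq : ℕ → S := fun k => Nat.rec ⟨K, subset_rfl, hconv, hopen, hf0, hg0⟩ (fun k A => step (enum k) A) k
  have seq_succ : ∀ k, seq (k+1) = step (enum k) (seq k) := fun k => rfl
  have anti : Antitone (fun k => closure (seq k).1) := antitone_nat_of_succ_le fun k => by
    rw [seq_succ]; exact closure_mono (hstep1 _ _)
  have hcpt : ∀ k, IsCompact (closure (seq k).1) := fun k => (hbdd.subset (seq k).2.1).isCompact_closure
  have hnon : ∀ k, (closure (seq k).1).Nonempty := fun k => by
    apply Set.Nonempty.closure
    by_contra hc
    rw [Set.not_nonempty_iff_eq_empty] at hc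
    have := (seq k).2.2.2.2.2
    rw [hc] at this
    simp at this
  set C := ⋂ k, closure (seq k).1 with hC
  have Cne : C.Nonempty := IsCompact.nonempty_iInter_of_directed_nonempty_isCompact_isClosed _
    anti.directed_ge hnon hcpt (fun k => isClosed_closure)
  have minors : ∀ x ∈ C, ∀ y ∈ C, ∀ z ∈ C, ∀ i j, (y i - x i) * (z j - x j) - (y j - x j) * (z i - x i) = 0 := by
    intro x hx y hy z hz i j
    by_contra hD
    have hij : i ≠ j := by
      rintro rfl
      apply hD; ring
    obtain ⟨a, b, s, t, hs, ht, hst, ha, hb⟩ := PW.rat_pt (x i) (x j) _ _ _ _ hD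
    obtain ⟨k, hk⟩ := henum (i, j, a, b)
    obtain ⟨p, q, hpq, hh⟩ := hstep2 (enum k) (seq k) (by rw [hk]; exact hij)
    rw [← seq_succ, hk] at hh
    simp only at hh
    have hcl : ∀ x ∈ C, 0 ≤ p * (x i - (a:ℝ)) + q * (x j - (b:ℝ)) := by
      intro x hx
      have hx' : x ∈ closure (seq (k+1)).1 := Set.mem_iInter.1 hx (k+1)
      have hcl : IsClosed {x : EuclideanSpace ℝ (Fin (n+1)) | 0 ≤ p * (x i - (a:ℝ)) + q * (x j - (b:ℝ))} :=
        isClosed_le continuous_const (by fun_prop)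
      exact (closure_minimal (fun x hx => hh x hx) hcl) hx'
    refine PW.no_tri (x i) (x j) _ _ _ _ hD a b s t hs ht hst ha hb p q hpq (hcl x hx) ?_ ?_
    · have := hcl y hy
      simpa using this
    · have := hcl z hz
      simpa using this
  obtain ⟨p, e, he, hl⟩ := PW.line n C Cne minors
  obtain ⟨k, hk⟩ := exists_subset_nhds_of_isCompact (V := fun k => closure (seq k).1) (U := Metric.thickening ε C) anti.directed_ge hcpt (fun x hx =>
    (Metric.isOpen_thickening).mem_nhds (Metric.self_subset_thickening hε C hx))
  refine ⟨(seq k).1, (seq k).2.1, (seq k).2.2.1, (seq k).2.2.2.1, (seq k).2.2.2.2.1, (seq k).2.2.2.2.2, p, e, he, ?_⟩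
  intro x hx
  obtain ⟨z, hz, hxz⟩ := Metric.mem_thickening_iff.1 (hk (subset_closure hx))
  obtain ⟨s, rfl⟩ := hl z hz
  exact ⟨s, by rwa [← dist_eq_norm]⟩


theorem PW.core (n : ℕ) (K : Set (EuclideanSpace ℝ (Fin (n+1)))) (hconv : Convex ℝ K) (hopen : IsOpen K)
    (hbdd : Bornology.IsBounded K) (hne : K.Nonempty) (v : EuclideanSpace ℝ (Fin (n+1)) → ℝ)
    (hv : ContDiff ℝ 1 v) (hvs : HasCompactSupport v) :
    ∫ x in K, (v x - ⨍ y in K, v y)^2 ≤ (Metric.diam K / Real.pi)^2 * ∫ x in K, ‖fderiv ℝ v x‖^2 := by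
  by_contra! hcon
  set c := (Metric.diam K / Real.pi)^2 with hc
  have hc0 : 0 ≤ c := by positivity
  set m := ⨍ y in K, v y with hm
  set v' := fderiv ℝ v with hv'
  have cv : Continuous v := hv.continuous
  have cv' : Continuous v' := hv.continuous_fderiv (by norm_num)
  have sv' : HasCompactSupport v' := hvs.fderiv (𝕜 := ℝ)
  have hKfin : volume K < ⊤ := hbdd.measure_lt_top
  have hKpos : 0 < volume K := hopen.measure_pos volume hne
  have hV : 0 < volume.real K := ENNReal.toReal_pos hKpos.ne' hKfin.ne
  have intK : ∀ A ⊆ K, ∀ u : EuclideanSpace ℝ (Fin (n+1)) → ℝ, Continuous u → IntegrableOn u A := by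
    intro A hA u hu
    exact ((hu.continuousOn.integrableOn_compact hbdd.isCompact_closure).mono_set subset_closure).mono_set hA
  have hfi : ∫ x in K, (v x - m) = 0 := by
    rw [integral_sub (intK K subset_rfl v cv) (intK K subset_rfl _ continuous_const), setIntegral_const, hm, setAverage_eq,
      smul_eq_mul, smul_eq_mul, ← mul_assoc, mul_inv_cancel₀ hV.ne', one_mul, sub_self]
  obtain ⟨M1, hM1⟩ := hvs.exists_bound_of_continuous cv
  obtain ⟨M2, hM2⟩ := sv'.exists_bound_of_continuous cv'
  set M := M1 + |m| + M2 with hMdef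
  have hM1' : 0 ≤ M1 := (norm_nonneg _).trans (hM1 0)
  have hM2' : 0 ≤ M2 := (norm_nonneg _).trans (hM2 0)
  have hM0 : 0 ≤ M := by positivity
  have bf : ∀ x, |v x - m| ≤ M := fun x => by
    have := abs_sub (v x) m
    have h2 := hM1 x
    rw [Real.norm_eq_abs] at h2
    linarith
  have bv : ∀ x, ‖v' x‖ ≤ M := fun x => by
    have h2 := hM2 x
    have := abs_nonneg m
    linarith
  set I := (∫ x in K, (v x - m)^2) - c * ∫ x in K, ‖v' x‖^2 with hI
  have hIpos : 0 < I := by rw [hI]; linarith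
  set γ := I / (2 * volume.real K) with hγ
  have hγ0 : 0 < γ := by positivity
  have cfsq : Continuous fun x => (v x - m)^2 := by fun_prop
  have cnsq : Continuous fun x => ‖v' x‖^2 := by fun_prop
  have hgi : ∫ x in K, ((v x - m)^2 - c * ‖v' x‖^2 - γ) = I / 2 := by
    rw [integral_sub (intK K subset_rfl _ (by fun_prop)) (intK K subset_rfl _ continuous_const),
      integral_sub (intK K subset_rfl _ cfsq) (intK K subset_rfl _ (by fun_prop)), integral_const_mul, setIntegral_const, smul_eq_mul,
      ← hI, hγ]
    field_simp
    ring
  set η := min 1 (γ / (1 + 2 * M * (1 + c))) with hη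
  have hη0 : 0 < η := by
    rw [hη]; apply lt_min one_pos; positivity
  have hη1 : η ≤ 1 := min_le_left _ _
  have hη2 : η * (1 + 2 * M * (1 + c)) ≤ γ := by
    rw [← le_div_iff₀ (by positivity)]
    exact min_le_right _ _
  have uc1 := hvs.uniformContinuous_of_continuous cv
  have uc2 := sv'.uniformContinuous_of_continuous cv'
  obtain ⟨δ1, hδ1, huc1⟩ := Metric.uniformContinuous_iff.1 uc1 η hη0
  obtain ⟨δ2, hδ2, huc2⟩ := Metric.uniformContinuous_iff.1 uc2 η hη0
  obtain ⟨K', hK'K, hK'c, hK'o, hK'f, hK'g, p, e, he, hthin⟩ := PW.thin n K hconv hopen hbdd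
    (fun x => v x - m) (fun x => (v x - m)^2 - c * ‖v' x‖^2 - γ) (intK K subset_rfl _ (by fun_prop)) (intK K subset_rfl _ (by fun_prop))
    hfi (by rw [hgi]; positivity) (min δ1 δ2 / 2) (by positivity)
  have hK'ne : K'.Nonempty := by
    by_contra hcc
    rw [Set.not_nonempty_iff_eq_empty] at hcc
    rw [hcc] at hK'g
    simp at hK'g
  have hK'b := hbdd.subset hK'K
  have hV' : 0 < volume.real K' := ENNReal.toReal_pos (hK'o.measure_pos volume hK'ne).ne' hK'b.measure_lt_top.ne
  let P : ℝ → EuclideanSpace ℝ (Fin (n+1)) := fun s => p + (s - inner ℝ e p) • e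
  have cP : Continuous P := by simp only [P]; fun_prop
  have dP : ∀ s, HasDerivAt P e s := fun s => by
    have := (((hasDerivAt_id s).sub_const (inner ℝ e p)).smul_const e).const_add p
    simpa [P] using this
  let φ : ℝ → ℝ := fun s => v (P s) - m
  let φ1 : ℝ → ℝ := fun s => v' (P s) e
  have hφ : ∀ s, HasDerivAt φ (φ1 s) s := fun s => by
    have h1 : HasFDerivAt v (v' (P s)) (P s) := (hv.differentiable (by norm_num) _).hasFDerivAt
    exact (h1.comp_hasDerivAt s (dP s)).sub_const m
  have cφ1 : Continuous φ1 := (cv'.comp cP).clm_apply continuous_const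
  have cφ : Continuous φ := (cv.comp cP).sub continuous_const
  have hne' := PW.needle n K' hK'c hK'o hK'b hK'ne e he φ φ1 hφ cφ1
  have near : ∀ x ∈ K', dist x (P (inner ℝ e x)) < min δ1 δ2 := by
    intro x hx
    obtain ⟨s, hs⟩ := hthin x hx
    set r := x - (p + s • e) with hr
    have hx' : x = p + s • e + r := by rw [hr]; abel
    have hee : inner ℝ e e = (1:ℝ) := by rw [real_inner_self_eq_norm_sq, he]; norm_num
    have : x - P (inner ℝ e x) = r - (inner ℝ e r : ℝ) • e := by
      simp only [P]
      rw [hx', inner_add_right, inner_add_right, inner_smul_right, hee]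
      module
    rw [dist_eq_norm, this]
    have h1 : |inner ℝ e r| ≤ ‖r‖ := by
      have := abs_real_inner_le_norm e r
      rwa [he, one_mul] at this
    have h2 : ‖(inner ℝ e r : ℝ) • e‖ ≤ ‖r‖ := by rw [norm_smul, he, mul_one]; exact h1
    have := norm_sub_le r ((inner ℝ e r : ℝ) • e)
    linarith
  have n1 : ∀ x ∈ K', |v x - v (P (inner ℝ e x))| ≤ η := fun x hx => by
    have := huc1 ((near x hx).trans_le (min_le_left _ _))
    rw [Real.dist_eq] at this
    exact this.le
  have n2 : ∀ x ∈ K', |v' x e - v' (P (inner ℝ e x)) e| ≤ η := fun x hx => by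
    have := huc2 ((near x hx).trans_le (min_le_right _ _))
    rw [dist_eq_norm] at this
    have h2 := (v' x - v' (P (inner ℝ e x))).le_opNorm e
    rw [he, mul_one, Real.norm_eq_abs] at h2
    exact h2.trans this.le
  have sqdiff : ∀ a b : ℝ, |a| ≤ M → |b| ≤ M → |a - b| ≤ η → |a^2 - b^2| ≤ 2 * M * η := by
    intro a b ha hb hab
    have : a^2 - b^2 = (a + b) * (a - b) := by ring
    rw [this, abs_mul]
    have h1 : |a + b| ≤ 2 * M := (abs_add_le a b).trans (by linarith)
    exact mul_le_mul h1 hab (abs_nonneg _) (by positivity)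
  have be : ∀ y, |v' y e| ≤ ‖v' y‖ := fun y => by
    have := (v' y).le_opNorm e
    rwa [he, mul_one, Real.norm_eq_abs] at this
  have pt : ∀ x ∈ K', (v x - m)^2 - c * ‖v' x‖^2 - γ ≤ (φ (inner ℝ e x)^2 - c * φ1 (inner ℝ e x)^2) + (2 * M * η * (1 + c) - γ) := by
    intro x hx
    have h1 := (abs_le.1 (sqdiff (v x - m) (v (P (inner ℝ e x)) - m) (bf _) (bf _) (by simpa using n1 x hx))).2
    have h2 := (abs_le.1 (sqdiff (v' x e) (v' (P (inner ℝ e x)) e) ((be _).trans (bv _)) ((be _).trans (bv _)) (n2 x hx))).1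
    have h3 : (v' x e)^2 ≤ ‖v' x‖^2 := by
      rw [← sq_abs]; gcongr; exact be x
    have h4 : c * (v' (P (inner ℝ e x)) e)^2 ≤ c * (‖v' x‖^2 + 2 * M * η) := by
      gcongr; linarith
    simp only [φ, φ1]
    linarith
  have cin : Continuous fun x : EuclideanSpace ℝ (Fin (n+1)) => inner ℝ e x := by fun_prop
  have cA : Continuous fun x : EuclideanSpace ℝ (Fin (n+1)) => φ (inner ℝ e x) := cφ.comp cin
  have cB : Continuous fun x : EuclideanSpace ℝ (Fin (n+1)) => φ1 (inner ℝ e x) := cφ1.comp cin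
  have big : ∫ x in K', ((v x - m)^2 - c * ‖v' x‖^2 - γ) ≤
      ((∫ x in K', φ (inner ℝ e x)^2) - c * ∫ x in K', φ1 (inner ℝ e x)^2) + (2 * M * η * (1 + c) - γ) * volume.real K' := by
    have h := setIntegral_mono_on (intK K' hK'K _ (by fun_prop)) (intK K' hK'K _ (by fun_prop)) hK'o.measurableSet pt
    refine h.trans (le_of_eq ?_)
    rw [integral_add (intK K' hK'K _ (by fun_prop)) (intK K' hK'K _ (by fun_prop)),
      integral_sub (intK K' hK'K _ (by fun_prop)) (intK K' hK'K _ (by fun_prop)), integral_const_mul, setIntegral_const, smul_eq_mul]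
    ring
  have small : |∫ x in K', φ (inner ℝ e x)| ≤ η * volume.real K' := by
    have e1 : ∫ x in K', φ (inner ℝ e x) = ∫ x in K', (φ (inner ℝ e x) - (v x - m)) := by
      rw [integral_sub (intK K' hK'K _ cA) (intK K' hK'K _ (by fun_prop)), hK'f, sub_zero]
    rw [e1, ← Real.norm_eq_abs]
    apply norm_setIntegral_le_of_norm_le_const hK'b.measure_lt_top
    intro x hx
    have := n1 x hx
    rw [Real.norm_eq_abs, abs_sub_comm]
    simpa [φ] using this
  have hdiam : (Metric.diam K' / Real.pi)^2 ≤ c := by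
    rw [hc]
    have := Metric.diam_mono hK'K hbdd
    have := Real.pi_pos
    gcongr
  have hB0 : 0 ≤ ∫ x in K', φ1 (inner ℝ e x)^2 := integral_nonneg fun x => sq_nonneg _
  have hsq : (∫ x in K', φ (inner ℝ e x))^2 ≤ (η * volume.real K')^2 := by
    rw [← sq_abs]; gcongr
  have h5 : (Metric.diam K' / Real.pi)^2 * (volume.real K' * ∫ x in K', φ1 (inner ℝ e x)^2) ≤ c * (volume.real K' * ∫ x in K', φ1 (inner ℝ e x)^2) := by
    gcongr
  have h6 : volume.real K' * ((∫ x in K', φ (inner ℝ e x)^2) - c * ∫ x in K', φ1 (inner ℝ e x)^2) ≤ volume.real K' * (η^2 * volume.real K') := by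
    linarith
  have h7 := le_of_mul_le_mul_left h6 hV'
  have h8 : η ^ 2 ≤ η := by nlinarith
  have h9 : 0 < (η^2 + 2 * M * η * (1 + c) - γ) * volume.real K' := by linarith
  have h10 := pos_of_mul_pos_left h9 hV'.le
  linarith


open scoped Convolution in
theorem PW.moll (d : ℕ) (K A : Set (EuclideanSpace ℝ (Fin d))) (hopen : IsOpen K)
    (hbdd : Bornology.IsBounded K) (hA : IsCompact A) (hAK : A ⊆ K)
    (v : EuclideanSpace ℝ (Fin d) → ℝ) (v' : EuclideanSpace ℝ (Fin d) → (EuclideanSpace ℝ (Fin d) →L[ℝ] ℝ))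
    (hv : ∀ x ∈ K, HasFDerivAt v (v' x) x) (hv3 : IntegrableOn (fun x => ‖v' x‖^2) K) (δ : ℝ) (hδ : 0 < δ) :
    ∃ w : EuclideanSpace ℝ (Fin d) → ℝ, ContDiff ℝ 1 w ∧ HasCompactSupport w ∧ (∀ x ∈ A, |w x - v x| ≤ δ) ∧
      ∫ x in A, ‖fderiv ℝ w x‖^2 ≤ ∫ x in K, ‖v' x‖^2 := by
  have hKm := hopen.measurableSet
  have hvc : ContinuousOn v K := fun x hx => (hv x hx).continuousAt.continuousWithinAt
  obtain ⟨R, hR, hRK⟩ := hA.exists_cthickening_subset_open hopen hAK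
  set B := Metric.cthickening R A with hB
  have cB : IsCompact B := hA.cthickening
  have hvB : ContinuousOn v B := hvc.mono hRK
  obtain ⟨r0, hr0, huc⟩ := Metric.uniformContinuousOn_iff.1 (cB.uniformContinuousOn_of_continuous hvB) δ hδ
  set r := min R r0 with hr
  have hrpos : 0 < r := lt_min hR hr0
  let φ : ContDiffBump (0 : EuclideanSpace ℝ (Fin d)) := ⟨r / 2, r, by positivity, by linarith⟩
  set ρ := φ.normed volume with hρ
  have ρ0 : ∀ x, 0 ≤ ρ x := φ.nonneg_normed
  have ρC : ContDiff ℝ 1 ρ := φ.contDiff_normed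
  have ρS : HasCompactSupport ρ := φ.hasCompactSupport_normed
  have ρI : ∫ x, ρ x = 1 := φ.integral_normed
  have ρt : tsupport ρ = Metric.closedBall 0 r := φ.tsupport_normed_eq
  have ρint : Integrable ρ := ρC.continuous.integrable_of_hasCompactSupport ρS
  set u := B.indicator v with hu
  have hui : Integrable u := (hvB.integrableOn_compact cB).integrable_indicator cB.measurableSet
  have hus : HasCompactSupport u := by
    apply HasCompactSupport.intro cB
    intro x hx
    exact Set.indicator_of_notMem hx _
  set w := (u ⋆[ContinuousLinearMap.mul ℝ ℝ, volume] ρ) with hw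
  have wC : ContDiff ℝ 1 w := by
    have := ρS.contDiff_convolution_right (n := 1) (ContinuousLinearMap.mul ℝ ℝ) hui.locallyIntegrable ρC
    exact this
  have wS : HasCompactSupport w := HasCompactSupport.convolution (ContinuousLinearMap.mul ℝ ℝ) hus ρS
  have hball : ∀ x ∈ A, Metric.closedBall x r ⊆ B := fun x hx =>
    (Metric.closedBall_subset_closedBall (min_le_left _ _)).trans (Metric.closedBall_subset_cthickening hx R)
  have hAB : A ⊆ B := fun x hx => hball x hx (Metric.mem_closedBall_self hrpos.le)
  have wclose : ∀ x ∈ A, |w x - v x| ≤ δ := by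
    intro x hx
    have e : w x = ((ρ ⋆[ContinuousLinearMap.lsmul ℝ ℝ, volume] u) : _ → ℝ) x := by
      rw [hw, convolution_def, convolution_eq_swap]
      simp [mul_comm]
    have e2 : v x = u x := by rw [hu, Set.indicator_of_mem (hAB hx)]
    rw [e, e2, ← Real.dist_eq]
    apply φ.dist_normed_convolution_le hui.aestronglyMeasurable
    intro y hy
    have hyB : y ∈ B := hball x hx (Metric.ball_subset_closedBall hy)
    rw [← e2, hu, Set.indicator_of_mem hyB]
    exact (huc y hyB x (hAB hx) (lt_of_lt_of_le hy (min_le_right _ _))).le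
  set V := K.indicator v' with hV
  have hVm : AEStronglyMeasurable V volume := by
    have h1 : Measurable (fderiv ℝ v) := measurable_fderiv ℝ v
    have : V = K.indicator (fderiv ℝ v) := by
      apply Set.indicator_congr
      intro x hx
      exact (hv x hx).fderiv.symm
    rw [this]
    exact (h1.indicator hKm).aestronglyMeasurable
  set h := fun x => ‖V x‖ with hh
  have hhm : AEStronglyMeasurable h volume := hVm.norm
  have hh2 : (fun x => h x ^ 2) = K.indicator (fun x => ‖v' x‖^2) := by
    ext x
    by_cases hx : x ∈ K <;> simp [hh, hV, hx]
  have hh2i : Integrable (fun x => h x ^ 2) := by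
    rw [hh2]; exact hv3.integrable_indicator hKm
  have hhi : Integrable h := by
    have h1 : IntegrableOn h K := by
      have : IsFiniteMeasure (volume.restrict K) := ⟨by simpa using hbdd.measure_lt_top⟩
      refine Integrable.mono' ((hh2i.integrableOn (s := K)).add (integrable_const (1:ℝ))) hhm.restrict ?_
      refine .of_forall fun x => ?_
      have : 0 ≤ h x := norm_nonneg _
      simp only [Pi.add_apply]
      rw [Real.norm_of_nonneg this]
      nlinarith [sq_nonneg (h x - 1)]
    have h2 : h = K.indicator h := by
      ext x
      by_cases hx : x ∈ K <;> simp [hh, hV, hx]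
    rw [h2]
    exact h1.integrable_indicator hKm
  have hVi : Integrable V := by
    rw [← integrable_norm_iff hVm]; exact hhi
  obtain ⟨M, hM⟩ := ρS.exists_bound_of_continuous ρC.continuous
  have key : ∀ x ∈ A, ‖fderiv ℝ w x‖^2 ≤ ((fun t => h t ^ 2) ⋆[ContinuousLinearMap.mul ℝ ℝ, volume] ρ) x := by
    intro x hx
    set F := fun t => ρ (x - t) with hF
    have hF0 : ∀ t, 0 ≤ F t := fun t => ρ0 _
    have cF : Continuous F := ρC.continuous.comp (by fun_prop)
    have bF : ∀ t, ‖F t‖ ≤ M := fun t => hM _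
    have FI : ∫ t, F t = 1 := by rw [← ρI]; exact integral_sub_left_eq_self ρ volume x
    have Fint : Integrable F := ρint.comp_sub_left x
    have tF : tsupport F ⊆ Metric.closedBall x r := by
      have := tsupport_comp_subset_preimage ρ (f := fun t => x - t) (by fun_prop)
      refine this.trans ?_
      intro t ht
      rw [Set.mem_preimage, ρt, mem_closedBall_zero_iff] at ht
      rw [Metric.mem_closedBall', dist_eq_norm]
      exact ht
    have tFB : tsupport F ⊆ B := tF.trans (hball x hx)
    let F' : EuclideanSpace ℝ (Fin d) → (EuclideanSpace ℝ (Fin d) →L[ℝ] ℝ) := fun t => - fderiv ℝ ρ (x - t)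
    have hF' : ∀ t, HasFDerivAt F (F' t) t := by
      intro t
      have h1 : HasFDerivAt ρ (fderiv ℝ ρ (x - t)) (x - t) := (ρC.differentiable (by norm_num) _).hasFDerivAt
      have h2 : HasFDerivAt (fun t => x - t) (-(ContinuousLinearMap.id ℝ (EuclideanSpace ℝ (Fin d)))) t := (hasFDerivAt_id t).const_sub x
      have h3 := h1.comp t h2
      have e0 : F' t = (fderiv ℝ ρ (x - t)).comp (-(ContinuousLinearMap.id ℝ (EuclideanSpace ℝ (Fin d)))) := by
        ext e
        simp [F']
      rw [e0]
      exact h3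
    have hF'z : ∀ t, t ∉ B → F' t = 0 := by
      intro t ht
      have : t ∉ tsupport F := fun hc => ht (tFB hc)
      have h1 : F' t = fderiv ℝ F t := (hF' t).fderiv.symm
      rw [h1]
      exact image_eq_zero_of_notMem_tsupport fun hc => this (tsupport_fderiv_subset ℝ hc)
    have hFz : ∀ t, t ∉ B → F t = 0 := fun t ht => image_eq_zero_of_notMem_tsupport fun hc => ht (tFB hc)
    have cF' : Continuous F' := ((ρC.continuous_fderiv (by norm_num)).comp (by fun_prop : Continuous fun t => x - t)).neg
    have bF' : ∃ M', ∀ t, ‖F' t‖ ≤ M' := by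
      obtain ⟨M', hM'⟩ := (ρS.fderiv (𝕜 := ℝ)).exists_bound_of_continuous (ρC.continuous_fderiv (by norm_num))
      exact ⟨M', fun t => by simp only [F', norm_neg]; exact hM' _⟩
    obtain ⟨M', hM'⟩ := bF'
    have FHi : Integrable (fun t => F t * h t) := hhi.bdd_mul cF.aestronglyMeasurable (.of_forall bF)
    have FH2i : Integrable (fun t => F t * h t ^ 2) := hh2i.bdd_mul cF.aestronglyMeasurable (.of_forall bF)
    set a := ∫ t, F t * h t with ha
    have deriv_e : ∀ e, fderiv ℝ w x e = ∫ t, F t * V t e := by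
      intro e
      have h1 := ρS.hasFDerivAt_convolution_right (ContinuousLinearMap.mul ℝ ℝ) hui.locallyIntegrable ρC x
      rw [← hw] at h1
      rw [h1.fderiv, convolution_precompR_apply _ hui.locallyIntegrable (ρS.fderiv (𝕜 := ℝ)) (ρC.continuous_fderiv (by norm_num)), convolution_def]
      have e1 : (fun t => (ContinuousLinearMap.mul ℝ ℝ (u t)) (fderiv ℝ ρ (x - t) e)) = fun t => -(ContinuousLinearMap.mul ℝ ℝ (F' t e) (v t)) := by
        ext t
        by_cases ht : t ∈ B
        · simp [hu, ht, F', mul_comm]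
        · have := hF'z t ht
          have h2 : fderiv ℝ ρ (x - t) = 0 := by simpa [F'] using this
          simp [h2, F']
      have e2 : (fun t => F t * V t e) = fun t => ContinuousLinearMap.mul ℝ ℝ (F t) (v' t e) := by
        ext t
        by_cases ht : t ∈ B
        · simp [hV, hRK ht]
        · simp [hFz t ht]
      rw [e1, e2, integral_neg]
      symm
      apply integral_bilinear_hasFDerivAt_right_eq_neg_left_of_integrable
      · have : (fun t => ContinuousLinearMap.mul ℝ ℝ (F' t e) (v t)) = fun t => F' t e * u t := by
          ext t
          by_cases ht : t ∈ B
          · simp [hu, ht]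
          · simp [hF'z t ht]
        rw [this]
        apply hui.bdd_mul (c := M' * ‖e‖) (cF'.clm_apply continuous_const).aestronglyMeasurable
        exact .of_forall fun t => ((F' t).le_opNorm e).trans (by gcongr; exact hM' t)
      · rw [← e2]
        apply Integrable.bdd_mul (c := M) ?_ cF.aestronglyMeasurable (.of_forall bF)
        exact hVi.apply_continuousLinearMap e
      · have : (fun t => ContinuousLinearMap.mul ℝ ℝ (F t) (v t)) = fun t => F t * u t := by
          ext t
          by_cases ht : t ∈ B
          · simp [hu, ht]
          · simp [hFz t ht]
        rw [this]
        exact hui.bdd_mul cF.aestronglyMeasurable (.of_forall bF)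
      · intro t _; exact hF' t
      · intro t ht; exact hv t (hRK (tFB ht))
    have ha0 : 0 ≤ a := integral_nonneg fun t => mul_nonneg (hF0 t) (norm_nonneg _)
    have hna : ‖fderiv ℝ w x‖ ≤ a := by
      apply ContinuousLinearMap.opNorm_le_bound _ ha0
      intro e
      rw [deriv_e e, ha, ← integral_mul_const]
      apply norm_integral_le_of_norm_le (FHi.mul_const _)
      refine .of_forall fun t => ?_
      rw [norm_mul, Real.norm_of_nonneg (hF0 t), mul_assoc]
      exact mul_le_mul_of_nonneg_left ((V t).le_opNorm e) (hF0 t)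
    have hjen : a ^ 2 ≤ ∫ t, F t * h t ^ 2 := by
      have h1 : 0 ≤ ∫ t, (F t * h t ^ 2 - 2 * a * (F t * h t) + a ^ 2 * F t) := integral_nonneg fun t => by
        have := mul_nonneg (hF0 t) (sq_nonneg (h t - a))
        simp only [Pi.zero_apply]
        nlinarith
      have i1 : Integrable (fun t => F t * h t ^ 2 - 2 * a * (F t * h t)) := FH2i.sub (FHi.const_mul _)
      rw [integral_add i1 (Fint.const_mul _), integral_sub FH2i (FHi.const_mul _), integral_const_mul, integral_const_mul, FI, ← ha] at h1
      nlinarith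
    have e3 : ((fun t => h t ^ 2) ⋆[ContinuousLinearMap.mul ℝ ℝ, volume] ρ) x = ∫ t, F t * h t ^ 2 := by
      rw [convolution_def]
      simp [hF, mul_comm]
    rw [e3]
    refine le_trans ?_ hjen
    gcongr
  refine ⟨w, wC, wS, wclose, ?_⟩
  have convi : Integrable ((fun t => h t ^ 2) ⋆[ContinuousLinearMap.mul ℝ ℝ, volume] ρ) := hh2i.integrable_convolution _ ρint
  have conv0 : ∀ x, 0 ≤ ((fun t => h t ^ 2) ⋆[ContinuousLinearMap.mul ℝ ℝ, volume] ρ) x := fun x => by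
    rw [convolution_def]
    exact integral_nonneg fun t => mul_nonneg (sq_nonneg _) (ρ0 _)
  calc ∫ x in A, ‖fderiv ℝ w x‖^2 ≤ ∫ x in A, ((fun t => h t ^ 2) ⋆[ContinuousLinearMap.mul ℝ ℝ, volume] ρ) x := by
        apply setIntegral_mono_on _ convi.integrableOn hA.measurableSet key
        exact (((wC.continuous_fderiv (by norm_num)).norm.pow 2).continuousOn).integrableOn_compact hA
    _ ≤ ∫ x, ((fun t => h t ^ 2) ⋆[ContinuousLinearMap.mul ℝ ℝ, volume] ρ) x :=
        setIntegral_le_integral convi (.of_forall conv0)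
    _ = ∫ x, h x ^ 2 := by
        rw [integral_convolution _ hh2i ρint, ρI]; simp
    _ = ∫ x in K, ‖v' x‖^2 := by
        rw [hh2, integral_indicator hKm]


theorem PW.var_form (d : ℕ) (A : Set (EuclideanSpace ℝ (Fin d))) (hAf : volume A < ⊤) (hAp : 0 < volume A)
    (w : EuclideanSpace ℝ (Fin d) → ℝ) (h1 : IntegrableOn w A) (h2 : IntegrableOn (fun x => w x ^ 2) A) :
    ∫ x in A, (w x - ⨍ y in A, w y)^2 = (∫ x in A, w x ^ 2) - (∫ x in A, w x)^2 / volume.real A := by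
  have hV : 0 < volume.real A := ENNReal.toReal_pos hAp.ne' hAf.ne
  set m := ⨍ y in A, w y with hm
  have hm' : (∫ x in A, w x) = m * volume.real A := by
    rw [hm, setAverage_eq, smul_eq_mul]; field_simp
  have e : ∀ x, (w x - m)^2 = w x ^ 2 - 2 * m * w x + m ^ 2 := fun x => by ring
  simp_rw [e]
  have ic : IntegrableOn (fun _ : EuclideanSpace ℝ (Fin d) => m ^ 2) A := integrableOn_const hAf.ne
  have i1 : IntegrableOn (fun x => 2 * m * w x) A := h1.const_mul _
  have i2 : IntegrableOn (fun x => w x ^ 2 - 2 * m * w x) A := h2.sub i1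
  rw [integral_add i2 ic, integral_sub h2 i1, integral_const_mul, setIntegral_const, hm', smul_eq_mul]
  field_simp
  ring

theorem PW.stepA (n : ℕ) (K A : Set (EuclideanSpace ℝ (Fin (n+1)))) (hopen : IsOpen K)
    (hbdd : Bornology.IsBounded K) (hAc : Convex ℝ A) (hAo : IsOpen A) (hAn : A.Nonempty) (hAK : closure A ⊆ K)
    (v : EuclideanSpace ℝ (Fin (n+1)) → ℝ) (v' : EuclideanSpace ℝ (Fin (n+1)) → (EuclideanSpace ℝ (Fin (n+1)) →L[ℝ] ℝ))
    (hv : ∀ x ∈ K, HasFDerivAt v (v' x) x) (hv3 : IntegrableOn (fun x => ‖v' x‖^2) K) :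
    (∫ x in A, v x ^ 2) - (∫ x in A, v x)^2 / volume.real A ≤ (Metric.diam K / Real.pi)^2 * ∫ x in K, ‖v' x‖^2 := by
  have hAK' : A ⊆ K := subset_closure.trans hAK
  have hAb : Bornology.IsBounded A := hbdd.subset hAK'
  have cA : IsCompact (closure A) := hAb.isCompact_closure
  have hAf : volume A < ⊤ := hAb.measure_lt_top
  have hAp : 0 < volume A := hAo.measure_pos volume hAn
  have : IsFiniteMeasure (volume.restrict A) := ⟨by simpa using hAf⟩
  have hvc : ContinuousOn v (closure A) := fun x hx => (hv x (hAK hx)).continuousAt.continuousWithinAt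
  obtain ⟨M, hM⟩ := cA.exists_bound_of_continuousOn hvc
  have mo := fun k : ℕ => PW.moll (n+1) K (closure A) hopen hbdd cA hAK v v' hv hv3 (1 / ((k:ℝ) + 1)) (by positivity)
  choose w wC wS wcl wD using mo
  have hineq : ∀ k, (∫ x in A, w k x ^ 2) - (∫ x in A, w k x)^2 / volume.real A ≤ (Metric.diam K / Real.pi)^2 * ∫ x in K, ‖v' x‖^2 := by
    intro k
    have ci : ∀ g : EuclideanSpace ℝ (Fin (n+1)) → ℝ, Continuous g → IntegrableOn g (closure A) := fun g hg =>
      hg.continuousOn.integrableOn_compact cA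
    have cw := (wC k).continuous
    have cD : Continuous (fun x => ‖fderiv ℝ (w k) x‖^2) := ((wC k).continuous_fderiv (by norm_num)).norm.pow 2
    rw [← PW.var_form (n+1) A hAf hAp (w k) ((ci _ cw).mono_set subset_closure) ((ci _ (cw.pow 2)).mono_set subset_closure)]
    refine (PW.core n A hAc hAo hAb hAn (w k) (wC k) (wS k)).trans ?_
    have hpi := Real.pi_pos
    have hd : Metric.diam A ≤ Metric.diam K := Metric.diam_mono hAK' hbdd
    have h1 : ∫ x in A, ‖fderiv ℝ (w k) x‖^2 ≤ ∫ x in K, ‖v' x‖^2 :=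
      (setIntegral_mono_set (ci _ cD) (.of_forall fun x => sq_nonneg _) (HasSubset.Subset.eventuallyLE subset_closure)).trans (wD k)
    have h0 : 0 ≤ ∫ x in A, ‖fderiv ℝ (w k) x‖^2 := integral_nonneg fun x => sq_nonneg _
    have hdA : 0 ≤ Metric.diam A := Metric.diam_nonneg
    gcongr
  have one_le : ∀ k : ℕ, 1 / ((k:ℝ) + 1) ≤ 1 := fun k => by
    rw [div_le_one (by positivity)]
    have : (0:ℝ) ≤ k := Nat.cast_nonneg k
    linarith
  have wb : ∀ k, ∀ x ∈ A, |w k x| ≤ M + 1 := by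
    intro k x hx
    have h1 := wcl k x (subset_closure hx)
    have h2 := hM x (subset_closure hx)
    rw [Real.norm_eq_abs] at h2
    have h3 := abs_sub_abs_le_abs_sub (w k x) (v x)
    have := one_le k
    linarith
  have wlim : ∀ x ∈ A, Filter.Tendsto (fun k => w k x) Filter.atTop (nhds (v x)) := by
    intro x hx
    rw [tendsto_iff_dist_tendsto_zero]
    refine squeeze_zero (fun _ => dist_nonneg) (fun k => ?_) tendsto_one_div_add_atTop_nhds_zero_nat
    rw [Real.dist_eq]
    exact wcl k x (subset_closure hx)
  have L1 : Filter.Tendsto (fun k => ∫ x in A, w k x) Filter.atTop (nhds (∫ x in A, v x)) := by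
    apply tendsto_integral_of_dominated_convergence (fun _ => M + 1)
    · exact fun k => (wC k).continuous.aestronglyMeasurable
    · exact integrable_const _
    · exact fun k => (ae_restrict_iff' hAo.measurableSet).2 (.of_forall fun x hx => wb k x hx)
    · exact (ae_restrict_iff' hAo.measurableSet).2 (.of_forall fun x hx => wlim x hx)
  have L2 : Filter.Tendsto (fun k => ∫ x in A, w k x ^ 2) Filter.atTop (nhds (∫ x in A, v x ^ 2)) := by
    apply tendsto_integral_of_dominated_convergence (fun _ => (M + 1)^2)
    · exact fun k => ((wC k).continuous.pow 2).aestronglyMeasurable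
    · exact integrable_const _
    · refine fun k => (ae_restrict_iff' hAo.measurableSet).2 (.of_forall fun x hx => ?_)
      rw [norm_pow, Real.norm_eq_abs]
      have := wb k x hx
      gcongr
    · exact (ae_restrict_iff' hAo.measurableSet).2 (.of_forall fun x hx => (wlim x hx).pow 2)
  exact le_of_tendsto' (L2.sub ((L1.pow 2).div_const _)) hineq

theorem PW.main (n : ℕ) (K : Set (EuclideanSpace ℝ (Fin (n+1)))) (hconv : Convex ℝ K) (hopen : IsOpen K)
    (hbdd : Bornology.IsBounded K) (hne : K.Nonempty)
    (v : EuclideanSpace ℝ (Fin (n+1)) → ℝ) (v' : EuclideanSpace ℝ (Fin (n+1)) → (EuclideanSpace ℝ (Fin (n+1)) →L[ℝ] ℝ))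
    (hv : ∀ x ∈ K, HasFDerivAt v (v' x) x) (hv1 : IntegrableOn v K) (hv2 : IntegrableOn (fun x => (v x)^2) K)
    (hv3 : IntegrableOn (fun x => ‖v' x‖^2) K) :
    ∫ x in K, (v x - ⨍ y in K, v y)^2 ≤ (Metric.diam K / Real.pi)^2 * ∫ x in K, ‖v' x‖^2 := by
  have hKf : volume K < ⊤ := hbdd.measure_lt_top
  have hKp : 0 < volume K := hopen.measure_pos volume hne
  have hV : 0 < volume.real K := ENNReal.toReal_pos hKp.ne' hKf.ne
  rw [PW.var_form (n+1) K hKf hKp v hv1 hv2]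
  obtain ⟨x0, hx0⟩ := hne
  let s : ℕ → ℝ := fun k => 1 + 1 / ((k:ℝ) + 1)
  have hs1 : ∀ k, 1 < s k := fun k => by
    have : 0 < 1 / ((k:ℝ) + 1) := by positivity
    simp only [s]; linarith
  have hslim : Filter.Tendsto s Filter.atTop (nhds 1) := by
    have := tendsto_one_div_add_atTop_nhds_zero_nat (𝕜 := ℝ)
    have := this.const_add 1
    simpa [s] using this
  let T : ℕ → EuclideanSpace ℝ (Fin (n+1)) → EuclideanSpace ℝ (Fin (n+1)) := fun k x => x0 + s k • (x - x0)
  have cT : ∀ k, Continuous (T k) := fun k => by simp only [T]; fun_prop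
  let A : ℕ → Set (EuclideanSpace ℝ (Fin (n+1))) := fun k => T k ⁻¹' K
  have hback : ∀ k x, T k x ∈ closure K → x ∈ K := by
    intro k x hx
    have hs := hs1 k
    have hi : 0 < (s k)⁻¹ := by positivity
    have hi1 : (s k)⁻¹ < 1 := inv_lt_one_of_one_lt₀ hs
    have := hconv.combo_interior_closure_mem_interior (x := x0) (y := T k x) (by rwa [hopen.interior_eq]) hx
      (a := 1 - (s k)⁻¹) (b := (s k)⁻¹) (by linarith) hi.le (by ring)
    rw [hopen.interior_eq] at this
    have e : (1 - (s k)⁻¹) • x0 + (s k)⁻¹ • T k x = x := by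
      simp only [T]
      rw [smul_add, smul_smul, inv_mul_cancel₀ (by linarith), sub_smul, one_smul, one_smul]
      abel
    rwa [e] at this
  have hAo : ∀ k, IsOpen (A k) := fun k => hopen.preimage (cT k)
  have hAcl : ∀ k, closure (A k) ⊆ K := by
    intro k x hx
    apply hback k
    exact ((cT k).closure_preimage_subset K) hx
  have hAK : ∀ k, A k ⊆ K := fun k => subset_closure.trans (hAcl k)
  have hAc : ∀ k, Convex ℝ (A k) := by
    intro k x hx y hy a b ha hb hab
    have := hconv hx hy ha hb hab
    have e : a • T k x + b • T k y = T k (a • x + b • y) := by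
      have ea : a = 1 - b := by linarith
      simp only [T]
      rw [ea]
      module
    rw [e] at this
    exact this
  have hAn : ∀ k, (A k).Nonempty := fun k => ⟨x0, by simpa [A, T] using hx0⟩
  have lim : ∀ g : EuclideanSpace ℝ (Fin (n+1)) → ℝ, IntegrableOn g K →
      Filter.Tendsto (fun k => ∫ x in A k, g x) Filter.atTop (nhds (∫ x in K, g x)) := by
    intro g hg
    have e : ∀ k, ∫ x in A k, g x = ∫ x in K, (A k).indicator g x := fun k => by
      rw [setIntegral_indicator (hAo k).measurableSet, Set.inter_eq_right.2 (hAK k)]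
    simp_rw [e]
    apply tendsto_integral_of_dominated_convergence (fun x => ‖g x‖)
    · exact fun k => hg.aestronglyMeasurable.indicator (hAo k).measurableSet
    · exact hg.norm
    · exact fun k => .of_forall fun x => norm_indicator_le_norm_self _ _
    · refine (ae_restrict_iff' hopen.measurableSet).2 (.of_forall fun x hx => ?_)
      have h1 : Filter.Tendsto (fun k => T k x) Filter.atTop (nhds x) := by
        have := (hslim.smul_const (x - x0)).const_add x0
        simpa [T] using this
      have h2 : ∀ᶠ k in Filter.atTop, T k x ∈ K := h1.eventually (hopen.mem_nhds hx)
      apply tendsto_const_nhds.congr'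
      filter_upwards [h2] with k hk
      have : x ∈ A k := hk
      rw [Set.indicator_of_mem this]
  have hl1 := lim v hv1
  have hl2 := lim (fun x => v x ^ 2) hv2
  have hl3 : Filter.Tendsto (fun k => volume.real (A k)) Filter.atTop (nhds (volume.real K)) := by
    have := lim (fun _ => (1:ℝ)) (integrableOn_const hKf.ne)
    simpa using this
  exact le_of_tendsto' (hl2.sub ((hl1.pow 2).div hl3 hV.ne')) fun k =>
    PW.stepA n K (A k) hopen hbdd (hAc k) (hAo k) (hAn k) (hAcl k) v v' hv hv3



/-- Payne–Weinberger: optimal Poincaré inequality on a bounded convex open set `K ⊂ ℝ^d`: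
`‖v - v_m‖_{L²(K)} ≤ (1/π) · diam K · ‖∇v‖_{L²(K)}`. -/
theorem poincare_convex (d : ℕ) (K : Set (EuclideanSpace ℝ (Fin d)))
    (hconv : Convex ℝ K) (hopen : IsOpen K) (hbdd : Bornology.IsBounded K)
    (hne : K.Nonempty)
    (v : EuclideanSpace ℝ (Fin d) → ℝ)
    (v' : EuclideanSpace ℝ (Fin d) → (EuclideanSpace ℝ (Fin d) →L[ℝ] ℝ))
    (hv : ∀ x ∈ K, HasFDerivAt v (v' x) x)
    (hv1 : IntegrableOn v K)
    (hv2 : IntegrableOn (fun x => (v x) ^ 2) K)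
    (hv3 : IntegrableOn (fun x => ‖v' x‖ ^ 2) K) :
    Real.sqrt (∫ x in K, (v x - ⨍ y in K, v y) ^ 2) ≤
      (1 / Real.pi) * Metric.diam K * Real.sqrt (∫ x in K, ‖v' x‖ ^ 2) := by
  rcases d with _ | n
  · have h0 : ∀ x ∈ K, (v x - ⨍ y in K, v y)^2 = 0 := by
      intro x hx
      have hKs : K = Set.univ := by
        ext y; simp [Subsingleton.elim y x, hx]
      have hc : v = fun _ => v x := by ext y; rw [Subsingleton.elim y x]
      have hKf : volume K < ⊤ := hbdd.measure_lt_top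
      have hKp : 0 < volume K := hopen.measure_pos volume hne
      have : ⨍ y in K, v y = v x := by
        rw [hc]
        exact setAverage_const hKp.ne' hKf.ne (v x)
      rw [this]; simp
    rw [setIntegral_congr_fun hopen.measurableSet h0]
    have := Real.pi_pos
    simp only [integral_zero, Real.sqrt_zero]
    have := Metric.diam_nonneg (s := K)
    positivity
  · have h := PW.main n K hconv hopen hbdd hne v v' hv hv1 hv2 hv3
    have hpi := Real.pi_pos
    have hd := Metric.diam_nonneg (s := K)
    refine (Real.sqrt_le_sqrt h).trans (le_of_eq ?_)
    rw [Real.sqrt_mul (by positivity), Real.sqrt_sq (by positivity)]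
    ring
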